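/- arXiv:1406.1121 — 12 statements merged into one kernel-verified Lean document; each statement's English description precedes it below -/
import Mathlib

section
/- Let K be an idempotent semifield (a commutative semifield in which x + x = x for all x). If x, y ∈ K and n is a positive integer such that x^n + y^n = y^n, then x + y = y. -/
/-!
In an idempotent semiring write `a ≤ b` for `a + b = b`, so that `x + y` is the join of `x` and `y`.
Put `s = x + y`. Expanding one factor at a time, every mixed term of `s ^ (m + 1)` is absorbed by
`y * s ^ m`, so `s ^ (m + 1) = x ^ (m + 1) + y * s ^ m`. If `x ^ (m + 1) ≤ y ^ (m + 1)`, the first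
summand is absorbed as well, because `y ^ (m + 1) ≤ y * s ^ m`. Hence `s * s ^ m = y * s ^ m`, and
cancelling `s ^ m` gives `s = y`.
-/

theorem add_pow_succ_of_commute {K : Type*} [IdemSemiring K] {x y : K} (hxy : Commute x y)
    (m : ℕ) : (x + y) ^ (m + 1) = x ^ (m + 1) + y * (x + y) ^ m := by
  induction m with
  | zero => simp
  | succ m ih =>
    have absorb : x * (x + y) ^ m ≤ (x + y) ^ (m + 1) := by
      rw [pow_succ']
      gcongr
      exact le_self_add
    calc (x + y) ^ (m + 1 + 1)
        = x * (x + y) ^ (m + 1) + y * (x + y) ^ (m + 1) := by rw [pow_succ', add_mul]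
      _ = x * (x ^ (m + 1) + y * (x + y) ^ m) + y * (x + y) ^ (m + 1) := by rw [← ih]
      _ = x ^ (m + 1 + 1) + y * (x * (x + y) ^ m + (x + y) ^ (m + 1)) := by
        rw [mul_add, ← pow_succ', hxy.left_comm, add_assoc, ← mul_add]
      _ = x ^ (m + 1 + 1) + y * (x + y) ^ (m + 1) := by rw [add_eq_right_iff_le.2 absorb]

theorem monotonic_division_general {K : Type*} [IdemSemiring K] [IsRightCancelMulZero K]
    {x y : K} (hxy : Commute x y) {n : ℕ} (hn : n ≠ 0) (h : x ^ n ≤ y ^ n) : x ≤ y := by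
  obtain ⟨m, rfl⟩ := Nat.exists_eq_add_one_of_ne_zero hn
  obtain hs | hs := eq_or_ne (x + y) 0
  · calc x ≤ x + y := le_self_add
      _ = 0 := hs
      _ ≤ y := zero_le
  · have absorb : y ^ (m + 1) ≤ y * (x + y) ^ m := by
      rw [pow_succ']
      gcongr
      exact le_add_self
    have mul_eq : (x + y) * (x + y) ^ m = y * (x + y) ^ m := by
      rw [← pow_succ', add_pow_succ_of_commute hxy, add_eq_right_iff_le]
      exact h.trans absorb
    exact add_eq_right_iff_le.1 (mul_right_cancel₀ (pow_ne_zero m hs) mul_eq)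

/-- Let `K` be an idempotent semifield (a commutative semifield in which `x + x = x` for all
`x`). If `x, y ∈ K` and `n` is a positive integer such that `x ^ n + y ^ n = y ^ n`, then
`x + y = y`. -/
theorem monotonic_division {K : Type*} [Semifield K] (hK : ∀ x : K, x + x = x)
    (x y : K) (n : ℕ) (hn : 0 < n) (h : x ^ n + y ^ n = y ^ n) : x + y = y := by
  let : IdemSemiring K := .ofSemiring hK
  exact add_eq_right_iff_le.2
    (monotonic_division_general (.all x y) hn.ne' (add_eq_right_iff_le.1 h))
end

section
/- Let K be an idempotent semifield and let x ∈ K satisfy x^n = 1 for some positive integer n. Then x = 1. (Equivalently, the group of units of an idempotent semifield is torsion-free.) -/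
/-!
If `x ^ n = 1`, multiplication by `x` permutes the powers `1, x, …, x ^ (n - 1)` cyclically, so it
fixes their sum `s`. Cancelling `s` gives `x = 1` as soon as `s ≠ 0`. Since `1` is one of the terms
of `s`, the vanishing of `s` would provide an additive inverse of `1`, which is impossible when
addition is idempotent.
-/

section Semiring

open Finset

variable {R : Type*} [Semiring R] {x : R} {n : ℕ}

theorem mul_geom_sum_eq_self_of_pow_eq_one (hx : x ^ n = 1) :
    x * ∑ i ∈ range n, x ^ i = ∑ i ∈ range n, x ^ i := by
  cases n with
  | zero => simp
  | succ m =>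
    calc x * ∑ i ∈ range (m + 1), x ^ i
        = x ^ (m + 1) + x * ∑ i ∈ range m, x ^ i := by rw [geom_sum_succ', mul_add, ← pow_succ']
      _ = x * ∑ i ∈ range m, x ^ i + 1 := by rw [hx, add_comm]
      _ = ∑ i ∈ range (m + 1), x ^ i := geom_sum_succ.symm

theorem geom_sum_ne_zero_of_not_isAddUnit_one (h1 : ¬IsAddUnit (1 : R)) (x : R) (hn : n ≠ 0) :
    ∑ i ∈ range n, x ^ i ≠ 0 := by
  obtain ⟨m, rfl⟩ := Nat.exists_eq_succ_of_ne_zero hn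
  rw [geom_sum_succ, add_comm]
  exact fun h ↦ h1 (.of_add_eq_zero _ h)

theorem roots_of_unity_trivial_general [IsRightCancelMulZero R] (h1 : ¬IsAddUnit (1 : R))
    (hn : n ≠ 0) (hx : x ^ n = 1) : x = 1 :=
  mul_right_cancel₀ (geom_sum_ne_zero_of_not_isAddUnit_one h1 x hn) <| by
    rw [mul_geom_sum_eq_self_of_pow_eq_one hx, one_mul]

end Semiring

/-- Let `K` be an idempotent semifield and let `x ∈ K` satisfy `x ^ n = 1` for some positive
integer `n`. Then `x = 1`. -/
theorem roots_of_unity_trivial {K : Type*} [Semifield K] (hK : ∀ x : K, x + x = x)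
    (x : K) (n : ℕ) (hn : 0 < n) (h : x ^ n = 1) : x = 1 :=
  roots_of_unity_trivial_general (fun h1 ↦ one_ne_zero (h1.add_eq_left.mp (hK 1))) hn.ne' h
end

section
/- Let L be an idempotent semifield whose additive monoid is finitely generated (i.e., there is a finite subset S ⊆ L such that every element of L is a finite sum of elements of S; equivalently, L is a finitely generated semimodule over its prime subsemifield 𝔹 = {0,1}). Then every element of L equals 0 or 1, i.e., L = 𝔹. -/
/-!
A finitely generated idempotent commutative monoid contains an element `t` absorbing every other
one under addition, namely the sum of its generators, and there is only one such element.
Multiplication by a nonzero `x` is a surjective additive endomorphism, so it sends `t` to an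
absorbing element again: `x * t = t`. Since `t ≠ 0`, cancelling it gives `x = 1`.
-/

/-- An absorbing element for addition, like `⊤` in `ℕ∞`. If addition is idempotent, this is a
greatest element for the order `x ≤ y ↔ x + y = y`. Only one side is asked for, which suffices as
the additions of interest are commutative. -/
def IsAddAbsorbing {M : Type*} [Add M] (t : M) : Prop :=
  ∀ x : M, x + t = t

namespace IsAddAbsorbing

protected theorem unique {M : Type*} [AddCommMagma M] {s t : M}
    (hs : IsAddAbsorbing s) (ht : IsAddAbsorbing t) : s = t :=
  calc
    s = t + s := (hs t).symm
    _ = s + t := add_comm t s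
    _ = t := ht s

theorem ne_zero {M : Type*} [AddZeroClass M] [Nontrivial M] {t : M}
    (ht : IsAddAbsorbing t) : t ≠ 0 := by
  rintro rfl
  obtain ⟨x, hx⟩ := exists_ne (0 : M)
  exact hx ((add_zero x).symm.trans (ht x))

theorem map {M N F : Type*} [Add M] [Add N] [FunLike F M N] [AddHomClass F M N] {t : M}
    (ht : IsAddAbsorbing t) (f : F) (hf : Function.Surjective f) : IsAddAbsorbing (f t) := by
  intro y
  obtain ⟨x, rfl⟩ := hf y
  rw [← map_add, ht x]

theorem eq_zero_or_eq_one {K : Type*} [DivisionSemiring K] {t : K}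
    (ht : IsAddAbsorbing t) (x : K) : x = 0 ∨ x = 1 := by
  refine or_iff_not_imp_left.mpr fun hx => ?_
  have hxt : IsAddAbsorbing (x * t) := ht.map (AddMonoidHom.mulLeft x) (mul_left_surjective₀ hx)
  exact (mul_eq_right₀ ht.ne_zero).mp (hxt.unique ht)

end IsAddAbsorbing

theorem add_sum_eq_sum_of_mem_closure {M : Type*} [AddCommMonoid M] {S : Finset M}
    (hS : ∀ s ∈ S, s + s = s) {x : M} (hx : x ∈ AddSubmonoid.closure (S : Set M)) :
    x + ∑ s ∈ S, s = ∑ s ∈ S, s := by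
  classical
  induction hx using AddSubmonoid.closure_induction with
  | mem s hs => rw [← Finset.add_sum_erase S (fun s => s) hs, ← add_assoc, hS s hs]
  | zero => exact zero_add _
  | add a b _ _ ha hb => rw [add_assoc, hb, ha]

theorem exists_isAddAbsorbing {M : Type*} [AddCommMonoid M] [AddMonoid.FG M]
    (hM : ∀ x : M, x + x = x) : ∃ t : M, IsAddAbsorbing t := by
  obtain ⟨S, hS⟩ := AddMonoid.FG.fg_top (M := M)
  exact ⟨∑ s ∈ S, s, fun x =>
    add_sum_eq_sum_of_mem_closure (fun s _ => hM s) (hS ▸ AddSubmonoid.mem_top x)⟩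

theorem finite_extension_of_bool_general {K : Type*} [DivisionSemiring K] [AddMonoid.FG K]
    (hK : ∀ x : K, x + x = x) (x : K) : x = 0 ∨ x = 1 := by
  obtain ⟨t, ht⟩ := exists_isAddAbsorbing hK
  exact ht.eq_zero_or_eq_one x

/-- Let `L` be an idempotent semifield whose additive monoid is finitely generated, i.e. there is
a finite subset `S ⊆ L` such that every element of `L` is a finite sum of elements of `S`.
Then every element of `L` equals `0` or `1`, i.e. `L = 𝔹`. -/
theorem finite_extension_of_bool {L : Type*} [Semifield L] (hL : ∀ x : L, x + x = x)
    (hfg : ∃ S : Finset L, ∀ x : L, x ∈ AddSubmonoid.closure (S : Set L)) :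
    ∀ x : L, x = 0 ∨ x = 1 := by
  have : AddMonoid.FG L := ⟨hfg.imp fun S hS => (AddSubmonoid.eq_top_iff' _).mpr hS⟩
  exact finite_extension_of_bool_general hL
end

section
/- Let L be a selective idempotent semifield and f : ℤ_max →+* L an injective semiring homomorphism such that L is a finite extension of ℤ_max via f (i.e., there is a finite subset S ⊆ L such that every element of L is a finite sum of elements of the form f(a) * s with a ∈ ℤ_max, s ∈ S). Then the subgroup Z(f) := {w ∈ Lˣ : ∃ a : ℤ, (w : L) = f (trop a)} has finite index in the group of units Lˣ. -/
open Tropical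

/-- The subgroup `Z(f)` of `Lˣ` consisting of units lying in the image under `f` of the
nonzero elements of `ℤ_max = Tropical (WithTop ℤ)`. -/
def tropUnitSubgroup {L : Type*} [DivisionSemiring L]
    (f : Tropical (WithTop ℤ) →+* L) : Subgroup Lˣ where
  carrier := {w : Lˣ | ∃ a : ℤ, (w : L) = f (trop (a : WithTop ℤ))}
  one_mem' := ⟨0, by simp⟩
  mul_mem' := by
    rintro v w ⟨a, ha⟩ ⟨b, hb⟩
    refine ⟨a + b, ?_⟩
    rw [Units.val_mul, ha, hb, ← map_mul, ← Tropical.trop_add, ← WithTop.coe_add]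
  inv_mem' := by
    rintro w ⟨a, ha⟩
    refine ⟨-a, Units.inv_eq_of_mul_eq_one_right ?_⟩
    have h1 : trop ((a : WithTop ℤ)) * trop (((-a : ℤ) : WithTop ℤ)) = 1 := by
      rw [← Tropical.trop_add, ← WithTop.coe_add, add_neg_cancel, WithTop.coe_zero,
        Tropical.trop_zero]
    rw [ha, ← map_mul, h1, map_one]

/-!
In a selective semiring a finite sum is zero or equal to one of its summands. So if `L` is spanned
by a finite set `S`, every unit of `L` is a single product `f a * s` with `s ∈ S`; then `f a` and
`s` are themselves units, and `Lˣ` is covered by finitely many cosets of the image of `f`.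
-/

lemma eq_zero_or_mem_of_mem_closure_of_selective {M : Type*} [AddMonoid M]
    (hsel : ∀ x y : M, x + y = x ∨ x + y = y) {T : Set M} {x : M}
    (hx : x ∈ AddSubmonoid.closure T) : x = 0 ∨ x ∈ T := by
  induction hx using AddSubmonoid.closure_induction with
  | mem x hx => exact Or.inr hx
  | zero => exact Or.inl rfl
  | add x y _ _ hx hy =>
    rcases hsel x y with h | h
    · rwa [h]
    · rwa [h]

open scoped Pointwise in
lemma finiteIndex_of_mul_finite_eq_univ {G : Type*} [Group G] {H : Subgroup G} {T : Set G}
    (hT : T.Finite) (hcover : (H : Set G) * T = Set.univ) : H.FiniteIndex := by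
  have hleft : ⋃ t ∈ hT.toFinset, t⁻¹ • (H : Set G) = Set.univ := by
    refine Set.eq_univ_of_forall fun g ↦ ?_
    obtain ⟨h, hh, t, ht, hg⟩ : g⁻¹ ∈ (H : Set G) * T := hcover ▸ Set.mem_univ g⁻¹
    have hg' : g = t⁻¹ * h⁻¹ := (inv_eq_iff_eq_inv.mp hg.symm).trans (mul_inv_rev h t)
    exact Set.mem_biUnion (hT.mem_toFinset.mpr ht) ⟨h⁻¹, H.inv_mem hh, hg'.symm⟩
  exact Subgroup.finiteIndex_of_leftCoset_cover_const hleft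

section UnitIndex

variable {K L : Type*} [MonoidWithZero K]

lemma exists_mem_range_unitsMap_mul_eq [MonoidWithZero L] [Nontrivial L]
    (hK : ∀ a : K, a ≠ 0 → IsUnit a) (f : K →*₀ L) {w : Lˣ} {a : K} {s : L}
    (hw : (w : L) = f a * s) :
    ∃ z ∈ (Units.map (f : K →* L)).range, ∃ t : Lˣ, (t : L) = s ∧ z * t = w := by
  have ha : a ≠ 0 := by
    rintro rfl
    exact w.ne_zero (by rw [hw, map_zero, zero_mul])
  obtain ⟨u, rfl⟩ := hK a ha
  let z : Lˣ := Units.map (f : K →* L) u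
  have hs : ((z⁻¹ * w : Lˣ) : L) = s := by
    rw [Units.val_mul, hw]
    exact z.inv_mul_cancel_left s
  exact ⟨z, ⟨u, rfl⟩, z⁻¹ * w, hs, mul_inv_cancel_left z w⟩

theorem selective_finite_extension_finite_unit_index_general [Semiring L]
    (hK : ∀ a : K, a ≠ 0 → IsUnit a) (hsel : ∀ x y : L, x + y = x ∨ x + y = y) (f : K →*₀ L)
    (hfin : ∃ S : Finset L, ∀ x : L,
      x ∈ AddSubmonoid.closure {y : L | ∃ a : K, ∃ s ∈ S, y = f a * s}) :
    (Units.map (f : K →* L)).range.FiniteIndex := by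
  cases subsingleton_or_nontrivial L
  · infer_instance
  obtain ⟨S, hS⟩ := hfin
  have hT : {t : Lˣ | (t : L) ∈ S}.Finite :=
    S.finite_toSet.preimage Units.val_injective.injOn
  refine finiteIndex_of_mul_finite_eq_univ hT (Set.eq_univ_of_forall fun w ↦ ?_)
  obtain ⟨a, s, hs, hw⟩ :=
    (eq_zero_or_mem_of_mem_closure_of_selective hsel (hS w)).resolve_left w.ne_zero
  obtain ⟨z, hz, t, rfl, hzt⟩ := exists_mem_range_unitsMap_mul_eq hK f hw
  exact ⟨z, hz, t, hs, hzt⟩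

end UnitIndex

lemma exists_trop_coe_eq_of_ne_zero {Γ : Type*} {a : Tropical (WithTop Γ)} (ha : a ≠ 0) :
    ∃ n : Γ, trop (n : WithTop Γ) = a := by
  obtain ⟨n, hn⟩ := WithTop.ne_top_iff_exists.mp (untrop_injective.ne ha)
  exact ⟨n, untrop_injective hn⟩

lemma isUnit_trop_coe {Γ : Type*} [AddGroup Γ] (n : Γ) : IsUnit (trop (n : WithTop Γ)) := by
  refine isUnit_iff_exists.mpr ⟨trop ((-n : Γ) : WithTop Γ), ?_, ?_⟩
  · rw [← trop_add, ← WithTop.coe_add, add_neg_cancel, WithTop.coe_zero, trop_zero]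
  · rw [← trop_add, ← WithTop.coe_add, neg_add_cancel, WithTop.coe_zero, trop_zero]

lemma isUnit_tropical_of_ne_zero {Γ : Type*} [AddGroup Γ] {a : Tropical (WithTop Γ)}
    (ha : a ≠ 0) : IsUnit a := by
  obtain ⟨n, rfl⟩ := exists_trop_coe_eq_of_ne_zero ha
  exact isUnit_trop_coe n

lemma tropUnitSubgroup_eq_range_unitsMap {L : Type*} [DivisionSemiring L]
    (f : Tropical (WithTop ℤ) →+* L) :
    tropUnitSubgroup f = (Units.map (f : Tropical (WithTop ℤ) →* L)).range := by
  ext w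
  constructor
  · rintro ⟨n, hw⟩
    obtain ⟨u, hu⟩ := isUnit_trop_coe n
    exact ⟨u, Units.ext ((congrArg f hu).trans hw.symm)⟩
  · rintro ⟨u, rfl⟩
    obtain ⟨n, hn⟩ := exists_trop_coe_eq_of_ne_zero u.ne_zero
    exact ⟨n, congrArg f hn.symm⟩

/-- Let `L` be a selective idempotent semifield and `f : ℤ_max →+* L` an injective semiring
homomorphism such that `L` is a finite extension of `ℤ_max` via `f` (there is a finite subset
`S ⊆ L` such that every element of `L` is a finite sum of elements of the form `f a * s` with
`a ∈ ℤ_max`, `s ∈ S`).  Then the subgroup `Z(f)` has finite index in `Lˣ`. -/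
theorem selective_finite_extension_finite_unit_index {L : Type*} [Semifield L]
    (hidem : ∀ x : L, x + x = x)
    (hsel : ∀ x y : L, x + y = x ∨ x + y = y)
    (f : Tropical (WithTop ℤ) →+* L) (hf : Function.Injective f)
    (hfin : ∃ S : Finset L, ∀ x : L,
      x ∈ AddSubmonoid.closure {y : L | ∃ a : Tropical (WithTop ℤ), ∃ s ∈ S, y = f a * s}) :
    (tropUnitSubgroup f).FiniteIndex := by
  rw [tropUnitSubgroup_eq_range_unitsMap]
  exact selective_finite_extension_finite_unit_index_general
    (fun _ ↦ isUnit_tropical_of_ne_zero) hsel f.toMonoidWithZeroHom hfin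
end

section
/- Let M be a torsion-free additive abelian group, let g ∈ M be a nonzero element, and let Z = ℤ∙g be the infinite cyclic subgroup generated by g. Then for each positive integer n, the quotient group M/Z has at most one subgroup of order n, and every finite subgroup of M/Z is cyclic. -/
/-!
If `n • x` lies in `ℤ ∙ g`, then translating `x` by a multiple of `g` gives `n • x = a • g` with
`0 ≤ a < n`. When multiplication by `n` is injective on `M`, each of these `n` equations has at most
one solution, so at most `n` elements of `M ⧸ ℤ ∙ g` are killed by `n`. A subgroup of order `n`
consists of such elements and must therefore be all of them, and a finite group in which, for
every `m > 0`, at most `m` elements are killed by `m` is cyclic.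
-/

section AddGroup

variable {A : Type*} [AddGroup A]

lemma coe_eq_setOf_card_nsmul_eq_zero (H : AddSubgroup A)
    (hle : {a : A | Nat.card H • a = 0}.encard ≤ Nat.card H) :
    (H : Set A) = {a : A | Nat.card H • a = 0} := by
  have hsub : (H : Set A) ⊆ {a : A | Nat.card H • a = 0} := fun a ha =>
    congrArg Subtype.val (card_nsmul_eq_zero' (x := (⟨a, ha⟩ : H)))
  have hfin : (H : Set A).Finite := (Set.finite_of_encard_le_coe hle).subset hsub
  have : Finite H := hfin
  exact hfin.eq_of_subset_of_encard_le hsub (hle.trans_eq (ENat.card_eq_coe_natCard H).symm)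

lemma eq_of_card_eq_of_encard_nsmul_eq_zero_le {n : ℕ}
    (hle : {a : A | n • a = 0}.encard ≤ n) {H₁ H₂ : AddSubgroup A}
    (h₁ : Nat.card H₁ = n) (h₂ : Nat.card H₂ = n) : H₁ = H₂ := by
  have coe_eq (H : AddSubgroup A) (hH : Nat.card H = n) : (H : Set A) = {a : A | n • a = 0} := by
    subst hH
    exact coe_eq_setOf_card_nsmul_eq_zero H hle
  exact SetLike.coe_injective ((coe_eq H₁ h₁).trans (coe_eq H₂ h₂).symm)

lemma isAddCyclic_of_encard_nsmul_eq_zero_le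
    (hle : ∀ m : ℕ, 0 < m → {a : A | m • a = 0}.encard ≤ m)
    (H : AddSubgroup A) [Finite H] : IsAddCyclic H := by
  classical
  have := Fintype.ofFinite H
  refine isAddCyclic_of_card_nsmul_eq_zero_le fun m hm => ?_
  have hmaps : Set.MapsTo ((↑) : H → A) {a | m • a = 0} {a | m • a = 0} :=
    fun _ ha => congrArg Subtype.val ha
  have hcard : {a : H | m • a = 0}.encard ≤ m :=
    (Set.encard_le_encard_of_injOn hmaps Subtype.val_injective.injOn).trans (hle m hm)
  rw [← Nat.cast_le (α := ℕ∞), ← Set.encard_coe_eq_coe_finsetCard]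
  simpa using hcard

end AddGroup

/-- Let `M` be a torsion-free additive abelian group, `g ∈ M` a nonzero element, and
`Z = ℤ ∙ g` the (infinite cyclic) subgroup generated by `g`.  Then for each positive integer
`n`, the quotient group `M ⧸ Z` has at most one subgroup of order `n`, and every finite
subgroup of `M ⧸ Z` is cyclic. -/
theorem quotient_by_cyclic_at_most_one_subgroup {M : Type*} [AddCommGroup M]
    (htf : ∀ (x : M) (k : ℕ), 0 < k → k • x = 0 → x = 0)
    (g : M) (hg : g ≠ 0) (n : ℕ) (hn : 0 < n) :
    (∀ H₁ H₂ : AddSubgroup (M ⧸ AddSubgroup.zmultiples g),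
        Nat.card H₁ = n → Nat.card H₂ = n → H₁ = H₂) ∧
      (∀ H : AddSubgroup (M ⧸ AddSubgroup.zmultiples g), Finite H → IsAddCyclic H) := by
  have hle (m : ℕ) (hm : 0 < m) :
      {q : M ⧸ AddSubgroup.zmultiples g | m • q = 0}.encard ≤ m := by
    have hreg : IsSMulRegular M m := .of_right_eq_zero_of_smul fun x => htf x m hm
    -- Mathlib's `AddCircle g` is `M ⧸ ℤ ∙ g`, for any additive commutative group `M`.
    exact AddCircle.card_torsion_le_of_isSMulRegular g m hm.ne' hreg
  exact ⟨fun _ _ h₁ h₂ => eq_of_card_eq_of_encard_nsmul_eq_zero_le (hle n hn) h₁ h₂,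
    fun H _ => isAddCyclic_of_encard_nsmul_eq_zero_le hle H⟩
end

section
/- Let L be a subsemiring of the tropical real semifield ℝ_max = Tropical (WithTop ℝ) which contains the image of ℤ_max = Tropical (WithTop ℤ) (embedded via the coercion ℤ → ℝ), is closed under inverses of its nonzero elements, and is finitely generated as a semimodule over ℤ_max (i.e., there is a finite subset S ⊆ L such that every element of L is a finite sum of elements a * s with a in the image of ℤ_max and s ∈ S). Then there exists a positive integer n such that L = {0} ∪ {trop (a / n) : a ∈ ℤ}, the subsemifield corresponding to the subgroup (1/n)ℤ ⊆ ℝ. -/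
open Tropical

/-!
Let `M ⊆ ℝ` be the additive monoid of exponents of `L`; it contains `ℤ`. Tropical addition is
selective, so a finite sum of multiples `a * s` is one of its summands (or `0`), and finite
generation over `ℤ_max` says that `M` meets only finitely many cosets of `ℤ`. Hence `M / ℤ` is a
finite submonoid of the group `ℝ / ℤ`, and therefore a subgroup. If it has order `n`, then
`n M ⊆ ℤ`, that is `M ⊆ (1/n)ℤ`, and equality holds because `ℤ` has the same index `n` in both.
-/

section Quotient

variable {A : Type*} [AddGroup A] {M : AddSubmonoid A} {N : AddSubgroup A}

theorem neg_mem_of_finite_image_mk (hNM : N.toAddSubmonoid ≤ M)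
    (hM : ((QuotientAddGroup.mk : A → A ⧸ N) '' M).Finite) {x : A} (hx : x ∈ M) : -x ∈ M := by
  have hmaps : Set.MapsTo (fun k : ℕ ↦ ((k • x : A) : A ⧸ N)) Set.univ
      (QuotientAddGroup.mk '' (M : Set A)) :=
    fun k _ ↦ Set.mem_image_of_mem _ (nsmul_mem hx k)
  obtain ⟨i, -, j, -, hij, hmk⟩ := Set.infinite_univ.exists_lt_map_eq_of_mapsTo hmaps hM
  obtain ⟨d, rfl⟩ := Nat.exists_eq_add_of_lt hij
  have hperiod : (d + 1) • x ∈ N := by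
    have := QuotientAddGroup.eq.mp hmk
    rwa [add_assoc, add_nsmul, neg_add_cancel_left] at this
  have hneg : d • x + -((d + 1) • x) = -x := by
    rw [succ_nsmul', neg_add_rev, add_neg_cancel_left]
  exact hneg ▸ add_mem (nsmul_mem hx d) (hNM (N.neg_mem hperiod))

theorem relIndex_ne_zero_of_finite_image_mk {G : AddSubgroup A}
    (hG : ((QuotientAddGroup.mk : A → A ⧸ N) '' G).Finite) : N.relIndex G ≠ 0 := by
  have := hG.to_subtype
  let cosetOf (q : G ⧸ N.addSubgroupOf G) : (QuotientAddGroup.mk : A → A ⧸ N) '' G :=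
    ⟨(q.out : A), q.out, q.out.2, rfl⟩
  have hinj : Function.Injective cosetOf := fun q q' h ↦ by
    have hval : ((q.out : A) : A ⧸ N) = (q'.out : A) := congrArg Subtype.val h
    rw [← QuotientAddGroup.out_eq' q, ← QuotientAddGroup.out_eq' q']
    exact QuotientAddGroup.eq.mpr <| AddSubgroup.mem_addSubgroupOf.mpr <|
      QuotientAddGroup.eq.mp hval
  have := Finite.of_injective cosetOf hinj
  exact AddSubgroup.index_ne_zero_of_finite

end Quotient

section DivisionRing

variable {K : Type*} [DivisionRing K] [CharZero K]

theorem relIndex_zmultiples_one_zmultiples_inv {n : ℕ} (hn : n ≠ 0) :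
    (AddSubgroup.zmultiples (1 : K)).relIndex (AddSubgroup.zmultiples (n : K)⁻¹) = n := by
  have hcomap : (AddSubgroup.zmultiples (1 : K)).comap (zmultiplesHom K (n : K)⁻¹) =
      AddSubgroup.zmultiples (n : ℤ) := by
    ext k
    have hn' : (n : K) ≠ 0 := Nat.cast_ne_zero.mpr hn
    simp only [AddSubgroup.mem_comap, AddSubgroup.mem_zmultiples_iff, zmultiplesHom_apply,
      zsmul_eq_mul, mul_one, smul_eq_mul, eq_mul_inv_iff_mul_eq₀ hn']
    exact_mod_cast Iff.rfl
  rw [← AddSubgroup.range_zmultiplesHom (n : K)⁻¹, ← AddSubgroup.index_comap, hcomap,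
    Int.index_zmultiples, Int.natAbs_natCast]

theorem eq_zmultiples_inv_relIndex {G : AddSubgroup K} (hG : AddSubgroup.zmultiples 1 ≤ G)
    (hfin : (AddSubgroup.zmultiples 1).relIndex G ≠ 0) :
    G = AddSubgroup.zmultiples ((AddSubgroup.zmultiples 1).relIndex G : K)⁻¹ := by
  set n := (AddSubgroup.zmultiples 1).relIndex G with hn
  have hle : G ≤ AddSubgroup.zmultiples (n : K)⁻¹ := by
    intro g hg
    obtain ⟨k, hk⟩ := (AddSubgroup.zmultiples (1 : K)).nsmul_relIndex_mem hg
    have hkg : (k : K) = g * n := by simpa [← hn, Nat.cast_comm] using hk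
    exact ⟨k, by simp [hkg, hfin]⟩
  refine le_antisymm hle (AddSubgroup.relIndex_eq_one.mp ?_)
  have hmul := AddSubgroup.relIndex_mul_relIndex _ _ _ hG hle
  rw [relIndex_zmultiples_one_zmultiples_inv hfin, ← hn] at hmul
  exact Nat.eq_of_mul_eq_mul_left (Nat.pos_of_ne_zero hfin) (hmul.trans (mul_one n).symm)

theorem exists_eq_zmultiples_inv_of_finite_image_mk {M : AddSubmonoid K}
    (hM : (AddSubgroup.zmultiples 1).toAddSubmonoid ≤ M)
    (hfin : ((QuotientAddGroup.mk : K → K ⧸ AddSubgroup.zmultiples (1 : K)) '' M).Finite) :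
    ∃ n : ℕ, 0 < n ∧ M = (AddSubgroup.zmultiples (n : K)⁻¹).toAddSubmonoid := by
  let G : AddSubgroup K :=
    { M with neg_mem' := fun hx ↦ neg_mem_of_finite_image_mk hM hfin hx }
  have hindex := relIndex_ne_zero_of_finite_image_mk (G := G) hfin
  exact ⟨_, Nat.pos_of_ne_zero hindex,
    congrArg AddSubgroup.toAddSubmonoid (eq_zmultiples_inv_relIndex (G := G) hM hindex)⟩

end DivisionRing

section Tropical

theorem mem_closure_tropical_iff {R : Type*} [LinearOrder R] [OrderTop R] {T : Set (Tropical R)}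
    {x : Tropical R} : x ∈ AddSubmonoid.closure T ↔ x = 0 ∨ x ∈ T := by
  refine ⟨fun hx ↦ ?_, ?_⟩
  · induction hx using AddSubmonoid.closure_induction with
    | mem x hx => exact .inr hx
    | zero => exact .inl rfl
    | add x y _ _ hx hy =>
      obtain h | h := le_total x y
      · rwa [add_eq_left h]
      · rwa [add_eq_right h]
  · rintro (rfl | hx)
    · exact zero_mem _
    · exact AddSubmonoid.subset_closure hx

variable {Γ R : Type*}

theorem exists_eq_add_of_trop_mem_closure [Add R] [LinearOrder R] {f : Γ → R}
    {S : Set (Tropical (WithTop R))} {r : R}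
    (hr : trop (r : WithTop R) ∈ AddSubmonoid.closure
      {y | ∃ (a : WithTop Γ), ∃ s ∈ S, y = trop (a.map f) * s}) :
    ∃ (a : Γ) (t : R), trop (t : WithTop R) ∈ S ∧ r = f a + t := by
  obtain h | ⟨a, s, hs, h⟩ := mem_closure_tropical_iff.mp hr
  · exact absurd h (trop_coe_ne_zero r)
  · have h : (r : WithTop R) = a.map f + untrop s := congrArg untrop h
    obtain ⟨b, t, hb, ht, rfl⟩ := WithTop.add_eq_coe.mp h.symm
    obtain ⟨a, rfl, rfl⟩ := WithTop.map_eq_some_iff.mp hb.symm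
    exact ⟨a, t, by rwa [ht, trop_untrop], rfl⟩

/-- The finite part of a multiplicative submonoid of a tropical semiring, as an additive submonoid
of the underlying monoid of exponents: the element `r` stands for the nonzero scalar `trop r`. -/
def exponents [AddZeroClass R] (L : Submonoid (Tropical (WithTop R))) : AddSubmonoid R where
  carrier := {r | trop (r : WithTop R) ∈ L}
  zero_mem' := L.one_mem
  add_mem' := L.mul_mem

theorem mem_exponents [AddZeroClass R] {L : Submonoid (Tropical (WithTop R))} {r : R} :
    r ∈ exponents L ↔ trop (r : WithTop R) ∈ L :=
  Iff.rfl

theorem finite_image_mk_exponents [AddCommGroup R] [LinearOrder R] [AddGroup Γ]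
    {f : Γ →+ R} {L : Submonoid (Tropical (WithTop R))} {S : Set (Tropical (WithTop R))}
    (hS : S.Finite) (hL : ∀ x ∈ L, x ∈ AddSubmonoid.closure
      {y | ∃ (a : WithTop Γ), ∃ s ∈ S, y = trop (a.map f) * s}) :
    ((QuotientAddGroup.mk : R → R ⧸ f.range) '' exponents L).Finite := by
  have hfin : {t : R | trop (t : WithTop R) ∈ S}.Finite :=
    hS.preimage (trop_injective.comp WithTop.coe_injective).injOn
  refine (hfin.image QuotientAddGroup.mk).subset ?_
  rintro _ ⟨r, hr, rfl⟩
  obtain ⟨a, t, ht, rfl⟩ := exists_eq_add_of_trop_mem_closure (hL _ hr)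
  exact ⟨t, ht, QuotientAddGroup.eq.mpr ⟨a, by abel⟩⟩

theorem coe_eq_zero_union_trop_exponents [AddZeroClass R] {L : Submonoid (Tropical (WithTop R))}
    (h0 : 0 ∈ L) :
    (L : Set (Tropical (WithTop R))) =
      {0} ∪ {x | ∃ r ∈ exponents L, x = trop (r : WithTop R)} := by
  ext x
  obtain ⟨x, rfl⟩ := surjective_trop x
  cases x with
  | top => simp [h0]
  | coe r => simp [mem_exponents]

end Tropical

theorem finite_subextension_of_Rmax_general {K : Type*} [DivisionRing K] [LinearOrder K]
    [IsStrictOrderedRing K] (L : Subsemiring (Tropical (WithTop K)))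
    (hZ : ∀ a : ℤ, trop ((a : K) : WithTop K) ∈ L)
    (hfin : ∃ S : Finset (Tropical (WithTop K)), ∀ x ∈ L, x ∈ AddSubmonoid.closure
      {y : Tropical (WithTop K) | ∃ (a : WithTop ℤ), ∃ s ∈ S,
        y = trop (a.map (fun z : ℤ => (z : K))) * s}) :
    ∃ n : ℕ, 0 < n ∧ (L : Set (Tropical (WithTop K))) =
      {0} ∪ {x | ∃ a : ℤ, x = trop (((a : K) / (n : K) : K) : WithTop K)} := by
  obtain ⟨S, hS⟩ := hfin
  have hcosets := finite_image_mk_exponents (f := Int.castAddHom K) (L := L.toSubmonoid)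
    S.finite_toSet hS
  rw [Int.range_castAddHom] at hcosets
  have hint : (AddSubgroup.zmultiples (1 : K)).toAddSubmonoid ≤ exponents L.toSubmonoid := by
    rintro _ ⟨a, rfl⟩
    simpa [mem_exponents] using hZ a
  obtain ⟨n, hn, hexp⟩ := exists_eq_zmultiples_inv_of_finite_image_mk hint hcosets
  refine ⟨n, hn, ?_⟩
  rw [← Subsemiring.coe_toSubmonoid, coe_eq_zero_union_trop_exponents L.zero_mem, hexp]
  simp [AddSubgroup.mem_zmultiples_iff, div_eq_mul_inv]

/-- Let `L` be a subsemiring of the tropical real semifield `ℝ_max = Tropical (WithTop ℝ)`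
which contains the image of `ℤ_max = Tropical (WithTop ℤ)`, is closed under inverses of its
nonzero elements, and is finitely generated as a semimodule over `ℤ_max`.  Then there is a
positive integer `n` such that `L = {0} ∪ {trop (a / n) : a ∈ ℤ}`, the subsemifield
corresponding to the subgroup `(1/n)ℤ ⊆ ℝ`. -/
theorem finite_subextension_of_Rmax (L : Subsemiring (Tropical (WithTop ℝ)))
    (hZ : ∀ a : ℤ, trop ((a : ℝ) : WithTop ℝ) ∈ L)
    (hinv : ∀ x ∈ L, x ≠ 0 → x⁻¹ ∈ L)
    (hfin : ∃ S : Finset (Tropical (WithTop ℝ)), ↑S ⊆ (L : Set (Tropical (WithTop ℝ))) ∧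
      ∀ x ∈ L, x ∈ AddSubmonoid.closure
        {y : Tropical (WithTop ℝ) | ∃ (a : WithTop ℤ), ∃ s ∈ S,
          y = trop (a.map (fun z : ℤ => (z : ℝ))) * s}) :
    ∃ n : ℕ, 0 < n ∧ (L : Set (Tropical (WithTop ℝ))) =
      {0} ∪ {x | ∃ a : ℤ, x = trop (((a : ℝ) / (n : ℝ)) : WithTop ℝ)} :=
  finite_subextension_of_Rmax_general L hZ (hfin.imp fun _ hS ↦ hS.2)
end

section
/- Let L be an idempotent semifield and f : ℤ_max →+* L an injective semiring homomorphism which is archimedean (for every x ∈ L there exists y ∈ ℤ_max with x + f y = f y) and finite (there is a finite subset S ⊆ L such that every element of L is a finite sum of elements of the form f(a) * s with a ∈ ℤ_max, s ∈ S). Then the subgroup Z(f) := {w ∈ Lˣ : ∃ a : ℤ, (w : L) = f (trop a)} has finite index in Lˣ. -/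
open Tropical

/-!
Order the semifield `L` by `x ≤ y ↔ x + y = y`. Then `Lˣ` is a directed ordered group, `Z(f)` is
generated by an element `t ≥ 1`, and finiteness of `f` says that every `w : Lˣ` is a join
`⋁ i ∈ T, t ^ a i * s i` over a nonempty subset `T` of one finite family `s`.

The powers of `t` are cofinal: if `1 ≤ y`, two powers `y ^ j` and `y ^ k` with `j < k` are joins
over the same `T`, so comparing exponents gives `y ^ k ≤ t ^ M * y ^ j`, whence
`y ≤ y ^ (k - j) ≤ t ^ M`. Consequently `(t ^ k)⁻¹ ≤ s i ≤ t ^ k` for some `k` and all `i`.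

If `N` is the largest exponent in `w = ⋁ i ∈ T, t ^ a i * s i`, then `t ^ (N - 2 * k) * s i` lies
below `t ^ N * (t ^ k)⁻¹`, hence below the leading term. All exponents may therefore be taken in
`[N - 2 * k, N]` and `T` to be everything, which leaves finitely many joins modulo `t ^ N`.
-/

section OrderedGroup

variable {G ι : Type*} [Group G]

theorem finiteIndex_of_forall_exists_mul_mem {H : Subgroup G} {F : Set G} (hF : F.Finite)
    (hcover : ∀ w, ∃ z ∈ H, z * w ∈ F) : H.FiniteIndex := by
  have : Finite F := hF
  have hsurj : Function.Surjective fun y : F ↦ QuotientGroup.mk (s := H) (y : G)⁻¹ := by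
    intro q
    induction q using QuotientGroup.induction_on with
    | H w =>
      obtain ⟨z, hz, hzw⟩ := hcover w⁻¹
      exact ⟨⟨z * w⁻¹, hzw⟩, QuotientGroup.eq.2 (by simpa using hz)⟩
  have := Finite.of_surjective _ hsurj
  exact Subgroup.finiteIndex_of_finite_quotient

/-- The family `s` generates `G` over the powers of `t`: every element of `G` is the join of
finitely many elements `t ^ a i * s i`, at most one for each index `i`. This is the multiplicative
form of finite generation over the max-plus semiring `ℤ ∪ {-∞}`, where the indices outside `T` have
coefficient `-∞`. -/
def JoinGenerates [Preorder G] (t : G) (s : ι → G) : Prop :=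
  ∀ w : G, ∃ T : Finset ι, T.Nonempty ∧ ∃ a : ι → ℤ, IsLUB ((fun i ↦ t ^ a i * s i) '' T) w

section Preorder

variable [Preorder G] [MulLeftMono G] {t : G}

theorem zpow_monotone_of_one_le (ht : 1 ≤ t) : Monotone fun n : ℤ ↦ t ^ n := by
  intro m n hmn
  obtain ⟨d, rfl⟩ := Int.le.dest hmn
  simpa only [zpow_add, zpow_natCast] using le_mul_of_one_le_right' (one_le_pow_of_one_le' ht d)

variable [MulRightMono G] {s : ι → G}

theorem JoinGenerates.exists_pow_le_pow [Finite ι] (hs : JoinGenerates t s) (ht : 1 ≤ t) (y : G) :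
    ∃ n ≠ 0, ∃ M : ℕ, y ^ n ≤ t ^ M := by
  choose T _ a hlub using fun n : ℕ ↦ hs (y ^ n)
  obtain ⟨j, -, k, -, hjk, hT⟩ := Set.infinite_univ.exists_lt_map_eq_of_mapsTo
    (Set.mapsTo_univ T _) Set.finite_univ
  obtain ⟨M, hM⟩ := (Set.finite_range fun i ↦ (a k i - a j i).toNat).bddAbove
  have hle : y ^ k ≤ t ^ M * y ^ j := by
    refine (hlub k).2 ?_
    rintro _ ⟨i, hi, rfl⟩
    have hexp : t ^ (a k i - a j i) ≤ t ^ M := by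
      simpa only [zpow_natCast] using
        zpow_monotone_of_one_le ht (Int.toNat_le.1 (hM (Set.mem_range_self i)))
    calc t ^ a k i * s i = t ^ (a k i - a j i) * (t ^ a j i * s i) := by
          rw [← mul_assoc, ← zpow_add, sub_add_cancel]
      _ ≤ t ^ M * y ^ j := mul_le_mul' hexp ((hlub j).1 ⟨i, hT ▸ hi, rfl⟩)
  refine ⟨k - j, Nat.sub_ne_zero_of_lt hjk, M, ?_⟩
  rwa [pow_sub _ hjk.le, mul_inv_le_iff_le_mul]

theorem JoinGenerates.exists_le_pow [IsDirectedOrder G] [Finite ι] (hs : JoinGenerates t s)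
    (ht : 1 ≤ t) (x : G) : ∃ M : ℕ, x ≤ t ^ M := by
  obtain ⟨y, hy, hxy⟩ := exists_ge_ge 1 x
  obtain ⟨n, hn, M, hM⟩ := hs.exists_pow_le_pow ht y
  exact ⟨M, hxy.trans ((le_self_pow hy hn).trans hM)⟩

theorem exists_forall_mem_Icc_pow [Finite ι] (ht : 1 ≤ t) (hcofinal : ∀ x : G, ∃ M : ℕ, x ≤ t ^ M)
    (s : ι → G) : ∃ k : ℕ, ∀ i, s i ∈ Set.Icc (t ^ k)⁻¹ (t ^ k) := by
  choose M hM using hcofinal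
  obtain ⟨k, hk⟩ := (Set.finite_range fun i ↦ max (M (s i)) (M (s i)⁻¹)).bddAbove
  have hbound (i : ι) : M (s i) ≤ k ∧ M (s i)⁻¹ ≤ k := max_le_iff.1 (hk ⟨i, rfl⟩)
  exact ⟨k, fun i ↦ ⟨inv_le_of_inv_le' ((hM _).trans (pow_le_pow_right' ht (hbound i).2)),
    (hM _).trans (pow_le_pow_right' ht (hbound i).1)⟩⟩

theorem exists_isLUB_range_of_isLUB_image (ht : 1 ≤ t) {k : ℕ}
    (hs : ∀ i, s i ∈ Set.Icc (t ^ k)⁻¹ (t ^ k)) {T : Finset ι} (hT : T.Nonempty) {a : ι → ℤ} {w : G}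
    (hw : IsLUB ((fun i ↦ t ^ a i * s i) '' T) w) :
    ∃ N : ℤ, ∃ b : ι → ℤ, (∀ i, b i ∈ Set.Icc (N - 2 * k) N) ∧
      IsLUB (Set.range fun i ↦ t ^ b i * s i) w := by
  classical
  obtain ⟨m, hm, hmax⟩ := T.exists_max_image a hT
  have hlow (i : ι) : t ^ (a m - 2 * k) * s i ≤ w :=
    calc t ^ (a m - 2 * k) * s i ≤ t ^ (a m - 2 * k) * t ^ k := mul_le_mul_right (hs i).2 _
      _ = t ^ a m * (t ^ k)⁻¹ := by
          rw [← zpow_natCast, ← zpow_neg, ← zpow_add, ← zpow_add]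
          congr 1
          ring
      _ ≤ t ^ a m * s m := mul_le_mul_right (hs m).1 _
      _ ≤ w := hw.1 ⟨m, hm, rfl⟩
  let b (i : ι) : ℤ := if i ∈ T then max (a i) (a m - 2 * k) else a m - 2 * k
  have hb_mem {i : ι} (hi : i ∈ T) : b i = max (a i) (a m - 2 * k) := if_pos hi
  have hb_notMem {i : ι} (hi : i ∉ T) : b i = a m - 2 * k := if_neg hi
  refine ⟨a m, b, fun i ↦ ?_, ?_, fun v hv ↦ hw.2 ?_⟩
  · by_cases hi : i ∈ T
    · exact hb_mem hi ▸ ⟨le_max_right _ _, max_le (hmax i hi) (by lia)⟩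
    · exact hb_notMem hi ▸ ⟨le_rfl, by lia⟩
  · rintro _ ⟨i, rfl⟩
    by_cases hi : i ∈ T
    · rcases max_choice (a i) (a m - 2 * k) with h | h
      · simpa only [hb_mem hi, h] using hw.1 ⟨i, hi, rfl⟩
      · simpa only [hb_mem hi, h] using hlow i
    · simpa only [hb_notMem hi] using hlow i
  · rintro _ ⟨i, hi, rfl⟩
    have hab : a i ≤ b i := hb_mem hi ▸ le_max_left _ _
    exact (mul_le_mul_left (zpow_monotone_of_one_le ht hab) _).trans (hv ⟨i, rfl⟩)

end Preorder

theorem finite_setOf_exists_isLUB {α β : Type*} [PartialOrder α] {A : Set β} (hA : A.Finite)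
    (f : β → Set α) : {x | ∃ b ∈ A, IsLUB (f b) x}.Finite := by
  have hunion : {x | ∃ b ∈ A, IsLUB (f b) x} = ⋃ b ∈ A, {x | IsLUB (f b) x} := by
    ext x
    simp
  rw [hunion]
  exact hA.biUnion fun b _ ↦ Set.Subsingleton.finite fun _ hx _ hy ↦ IsLUB.unique hx hy

theorem JoinGenerates.finiteIndex_zpowers [PartialOrder G] [MulLeftMono G] [MulRightMono G]
    [IsDirectedOrder G] [Finite ι] {t : G} {s : ι → G} (hs : JoinGenerates t s) (ht : 1 ≤ t) :
    (Subgroup.zpowers t).FiniteIndex := by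
  obtain ⟨k, hk⟩ := exists_forall_mem_Icc_pow ht (hs.exists_le_pow ht) s
  have hexp : {b : ι → ℤ | ∀ i, b i ∈ Set.Icc (-(2 * k) : ℤ) 0}.Finite :=
    Set.Finite.pi' fun _ ↦ Set.finite_Icc _ _
  refine finiteIndex_of_forall_exists_mul_mem
    (finite_setOf_exists_isLUB hexp fun b ↦ Set.range fun i ↦ t ^ b i * s i) fun w ↦ ?_
  obtain ⟨T, hT, a, hw⟩ := hs w
  obtain ⟨N, b, hb, hlub⟩ := exists_isLUB_range_of_isLUB_image ht hk hT hw
  refine ⟨t ^ (-N), Subgroup.zpow_mem_zpowers t _, fun i ↦ -N + b i, fun i ↦ ?_, ?_⟩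
  · obtain ⟨hlo, hhi⟩ := hb i
    constructor <;> lia
  · simpa only [← Set.range_comp, Function.comp_def, OrderIso.mulLeft_apply, ← mul_assoc,
      ← zpow_add] using (OrderIso.mulLeft (t ^ (-N))).isLUB_image'.2 hlub

end OrderedGroup

section Units

variable {M : Type*} [Monoid M]

instance units_mulLeftMono [Preorder M] [MulLeftMono M] : MulLeftMono Mˣ :=
  ⟨fun u _ _ h ↦ mul_le_mul_right (α := M) h u⟩

instance units_mulRightMono [Preorder M] [MulRightMono M] : MulRightMono Mˣ :=
  ⟨fun u _ _ h ↦ mul_le_mul_left (α := M) h u⟩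

instance finite_units_mem_finset (S : Finset M) : Finite {u : Mˣ // (u : M) ∈ S} :=
  S.finite_toSet.preimage Units.val_injective.injOn

end Units

section Semiring

theorem add_self_of_ringHom {R A : Type*} [NonAssocSemiring R] [NonAssocSemiring A] (f : R →+* A)
    (hR : (1 : R) + 1 = 1) (x : A) : x + x = x := by
  rw [← mul_one x, ← mul_add, ← map_one f, ← map_add, hR]

variable {A : Type*} [Semiring A]

theorem exists_eq_sum_mul_of_mem_closure {R : Type*} [Semiring R] (f : R →+* A)
    {S : Finset A} {x : A}
    (hx : x ∈ AddSubmonoid.closure {y | ∃ a : R, ∃ s ∈ S, y = f a * s}) :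
    ∃ a : A → R, x = ∑ s ∈ S, f (a s) * s := by
  let := Module.compHom A f
  have hspan : x ∈ Submodule.span R (S : Set A) := by
    rw [← Submodule.mem_toAddSubmonoid, Submodule.span_eq_closure]
    refine AddSubmonoid.closure_mono ?_ hx
    rintro _ ⟨a, s, hs, rfl⟩
    exact Set.smul_mem_smul (Set.mem_univ a) hs
  obtain ⟨a, -, rfl⟩ := Submodule.mem_span_finset.1 hspan
  exact ⟨a, rfl⟩

/-- The homomorphism `n ↦ f (trop (-n))` from `ℤ` to the units of `A`. The sign turns the min-plus
exponents of `Tropical (WithTop ℤ)` into max-plus ones, so that this is monotone in `n` for the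
order `x ≤ y ↔ x + y = y`. -/
def tropUnitHom (f : Tropical (WithTop ℤ) →+* A) : Multiplicative ℤ →* Aˣ :=
  MonoidHom.toHomUnits
    { toFun n := f (trop ((-n.toAdd : ℤ) : WithTop ℤ))
      map_one' := by simp
      map_mul' m n := by
        rw [← map_mul, ← trop_add, ← WithTop.coe_add, toAdd_mul, neg_add] }

/-- The generator `f (trop (-1))` of `Z(f)`, chosen so that it is at least `1` for the order
`x ≤ y ↔ x + y = y`. -/
def tropUnit (f : Tropical (WithTop ℤ) →+* A) : Aˣ :=
  tropUnitHom f (.ofAdd 1)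

theorem val_tropUnit_zpow (f : Tropical (WithTop ℤ) →+* A) (n : ℤ) :
    ((tropUnit f ^ n : Aˣ) : A) = f (trop ((-n : ℤ) : WithTop ℤ)) := by
  rw [tropUnit, ← map_zpow, ← ofAdd_zsmul, smul_eq_mul, mul_one]
  rfl

theorem exists_map_eq_tropUnit_zpow (f : Tropical (WithTop ℤ) →+* A) {x : Tropical (WithTop ℤ)}
    (hx : x ≠ 0) : ∃ n : ℤ, f x = (tropUnit f ^ n : Aˣ) := by
  obtain ⟨a, ha⟩ := WithTop.ne_top_iff_exists.1 (mt untrop_eq_iff_eq_trop.1 hx)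
  exact ⟨-a, by rw [val_tropUnit_zpow, neg_neg, ha, trop_untrop]⟩

end Semiring

theorem tropUnitSubgroup_eq_zpowers {L : Type*} [DivisionSemiring L]
    (f : Tropical (WithTop ℤ) →+* L) : tropUnitSubgroup f = Subgroup.zpowers (tropUnit f) := by
  ext w
  rw [Subgroup.mem_zpowers_iff]
  constructor
  · rintro ⟨a, ha⟩
    exact ⟨-a, Units.ext (by rw [val_tropUnit_zpow, neg_neg, ha])⟩
  · rintro ⟨n, rfl⟩
    exact ⟨-n, val_tropUnit_zpow f n⟩

section IdemSemiring

variable {A : Type*} [IdemSemiring A]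

theorem isLUB_finsetSum {ι : Type*} (T : Finset ι) (g : ι → A) :
    IsLUB (g '' T) (∑ i ∈ T, g i) := by
  refine ⟨?_, fun v hv ↦ ?_⟩
  · rintro _ ⟨i, hi, rfl⟩
    exact Finset.single_le_sum (fun _ _ ↦ zero_le) hi
  · exact Finset.sum_induction g (· ≤ v) (fun _ _ ↦ add_le) zero_le fun i hi ↦ hv ⟨i, hi, rfl⟩

theorem one_le_tropUnit (f : Tropical (WithTop ℤ) →+* A) : 1 ≤ tropUnit f := by
  have hle : trop ((-1 : ℤ) : WithTop ℤ) ≤ 1 := WithTop.coe_le_coe.2 (by decide)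
  rw [← Units.val_le_val, Units.val_one, ← add_eq_right_iff_le, ← map_one f]
  exact (map_add f _ _).symm.trans (congrArg f (Tropical.add_eq_right hle))

variable [Nontrivial A]

theorem isDirectedOrder_units (hunit : ∀ x : A, x ≠ 0 → IsUnit x) : IsDirectedOrder Aˣ where
  directed u v := by
    have hne : (u : A) + v ≠ 0 := fun h ↦ u.ne_zero (le_zero_iff.1 (le_self_add.trans_eq h))
    obtain ⟨z, hz⟩ := hunit _ hne
    exact ⟨z, Units.val_le_val.1 (hz ▸ le_self_add), Units.val_le_val.1 (hz ▸ le_add_self)⟩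

theorem joinGenerates_tropUnit (hunit : ∀ x : A, x ≠ 0 → IsUnit x)
    (f : Tropical (WithTop ℤ) →+* A) {S : Finset A}
    (hS : ∀ w : Aˣ,
      (w : A) ∈ AddSubmonoid.closure {y | ∃ a : Tropical (WithTop ℤ), ∃ s ∈ S, y = f a * s}) :
    JoinGenerates (tropUnit f) fun u : {u : Aˣ // (u : A) ∈ S} ↦ (u : Aˣ) := by
  classical
  have := Fintype.ofFinite {u : Aˣ // (u : A) ∈ S}
  intro w
  obtain ⟨a, hw⟩ := exists_eq_sum_mul_of_mem_closure f (hS w)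
  have hlub := hw ▸ isLUB_finsetSum S fun x ↦ f (a x) * x
  choose! n hn using fun x ↦ exists_map_eq_tropUnit_zpow (x := x) f
  have hterm {u : Aˣ} (hu : a u ≠ 0) :
      ((tropUnit f ^ n (a u) * u : Aˣ) : A) = f (a u) * u := by
    rw [Units.val_mul, hn _ hu]
  have hunit_of_term_ne {x : A} (h0 : f (a x) * x ≠ 0) : ∃ u : Aˣ, (u : A) = x ∧ a u ≠ 0 := by
    obtain ⟨u, rfl⟩ := hunit x (right_ne_zero_of_mul h0)
    exact ⟨u, rfl, fun h ↦ h0 (by rw [h, map_zero, zero_mul])⟩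
  refine ⟨Finset.univ.filter fun u ↦ a (u : Aˣ) ≠ 0, ?_, fun u ↦ n (a (u : Aˣ)), ?_,
    fun v hv ↦ hlub.2 ?_⟩
  · obtain ⟨x, hx, h0⟩ := Finset.exists_ne_zero_of_sum_ne_zero (hw ▸ w.ne_zero)
    obtain ⟨u, rfl, hu⟩ := hunit_of_term_ne h0
    exact ⟨⟨u, hx⟩, by simpa using hu⟩
  · rintro _ ⟨u, hu, rfl⟩
    exact hlub.1 ⟨u.1, u.2, (hterm (by simpa using hu)).symm⟩
  · rintro _ ⟨x, hx, rfl⟩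
    by_cases h0 : f (a x) * x = 0
    · exact h0.trans_le zero_le
    · obtain ⟨u, rfl, hu⟩ := hunit_of_term_ne h0
      exact (hterm hu).ge.trans (hv ⟨⟨u, hx⟩, by simpa using hu, rfl⟩)

end IdemSemiring

theorem archimedean_finite_extension_finite_unit_index_general {L : Type*} [DivisionSemiring L]
    (f : Tropical (WithTop ℤ) →+* L)
    (hfin : ∃ S : Finset L, ∀ x : L,
      x ∈ AddSubmonoid.closure {y : L | ∃ a : Tropical (WithTop ℤ), ∃ s ∈ S, y = f a * s}) :
    (tropUnitSubgroup f).FiniteIndex := by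
  obtain ⟨S, hS⟩ := hfin
  have hidem : ∀ x : L, x + x = x := add_self_of_ringHom f (Tropical.add_self 1)
  have hunit : ∀ x : L, x ≠ 0 → IsUnit x := fun _ ↦ Ne.isUnit
  rw [tropUnitSubgroup_eq_zpowers]
  let : IdemSemiring L := .ofSemiring hidem
  have : IsDirectedOrder Lˣ := isDirectedOrder_units hunit
  exact (joinGenerates_tropUnit hunit f fun w ↦ hS w).finiteIndex_zpowers (one_le_tropUnit f)

/-- Let `L` be an idempotent semifield and `f : ℤ_max →+* L` an injective semiring
homomorphism which is archimedean and finite.  Then the subgroup `Z(f)` has finite index in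
`Lˣ`. -/
theorem archimedean_finite_extension_finite_unit_index {L : Type*} [Semifield L]
    (hidem : ∀ x : L, x + x = x)
    (f : Tropical (WithTop ℤ) →+* L) (hf : Function.Injective f)
    (harch : ∀ x : L, ∃ y : Tropical (WithTop ℤ), x + f y = f y)
    (hfin : ∃ S : Finset L, ∀ x : L,
      x ∈ AddSubmonoid.closure {y : L | ∃ a : Tropical (WithTop ℤ), ∃ s ∈ S, y = f a * s}) :
    (tropUnitSubgroup f).FiniteIndex :=
  archimedean_finite_extension_finite_unit_index_general f hfin
end

section
/- Let L be an idempotent semifield and K ⊆ L a convex subsemifield (a subsemiring closed under inverses of its nonzero elements such that whenever x ∈ L and y, z ∈ K satisfy x + y = y and x + z = x, then x ∈ K). Then addition on L descends to the quotient of L by the action of Kˣ: for all x, y ∈ L and every nonzero u ∈ K, there exists a nonzero w ∈ K such that x + u * y = w * (x + y). -/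
/-!
An idempotent semifield is canonically ordered by `a ≤ b ↔ a + b = b`, and convexity of `K` is
order-convexity. Both `x + u * y ≤ (1 + u) * (x + y)` and `x + y ≤ (1 + u⁻¹) * (x + u * y)` hold,
so, unless `x + y = 0`, the quotient of `x + u * y` by `x + y` lies between the elements
`(1 + u⁻¹)⁻¹` and `1 + u` of `K`.
-/

theorem add_mul_le_one_add_mul_add {R : Type*} [NonAssocSemiring R] [LE R]
    [CanonicallyOrderedAdd R] (x y u : R) : x + u * y ≤ (1 + u) * (x + y) :=
  calc
    x + u * y ≤ (x + u * y) + (y + u * x) := le_self_add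
    _ = (x + y) + (u * x + u * y) := by ac_rfl
    _ = (1 + u) * (x + y) := by rw [add_mul, one_mul, mul_add]

theorem add_le_one_add_inv_mul_add_mul {L : Type*} [DivisionSemiring L] [LE L]
    [CanonicallyOrderedAdd L] (x y : L) {u : L} (hu : u ≠ 0) :
    x + y ≤ (1 + u⁻¹) * (x + u * y) := by
  simpa only [inv_mul_cancel_left₀ hu] using add_mul_le_one_add_mul_add x (u * y) u⁻¹

section CanonicallyOrdered

variable {L : Type*} [DivisionSemiring L] [PartialOrder L] [CanonicallyOrderedAdd L]

theorem exists_mem_ne_zero_eq_mul_of_le_mul {K : Set L} (hK : K.OrdConnected) (hone : 1 ∈ K)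
    (hinv : ∀ a ∈ K, a ≠ 0 → a⁻¹ ∈ K) {a b s t : L} (ha : a ∈ K) (hb : b ∈ K)
    (hst : s ≤ a * t) (hts : t ≤ b * s) : ∃ w ∈ K, w ≠ 0 ∧ t = w * s := by
  rcases eq_or_ne s 0 with rfl | hs
  · have ht : t = 0 := nonpos_iff_eq_zero.mp (by simpa only [mul_zero] using hts)
    exact ⟨1, hone, one_ne_zero, by rw [ht, mul_zero]⟩
  have hat : a * t ≠ 0 := fun h => hs (nonpos_iff_eq_zero.mp (h ▸ hst))
  have ha0 : a ≠ 0 := left_ne_zero_of_mul hat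
  have ht : t ≠ 0 := right_ne_zero_of_mul hat
  have hlower : a⁻¹ ≤ t * s⁻¹ :=
    calc
      a⁻¹ = a⁻¹ * s * s⁻¹ := (mul_inv_cancel_right₀ hs _).symm
      _ ≤ a⁻¹ * (a * t) * s⁻¹ := by gcongr
      _ = t * s⁻¹ := by rw [inv_mul_cancel_left₀ ha0]
  have hupper : t * s⁻¹ ≤ b :=
    calc
      t * s⁻¹ ≤ b * s * s⁻¹ := by gcongr
      _ = b := mul_inv_cancel_right₀ hs b
  exact ⟨t * s⁻¹, hK.out (hinv a ha ha0) hb ⟨hlower, hupper⟩,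
    mul_ne_zero ht (inv_ne_zero hs), (inv_mul_cancel_right₀ hs t).symm⟩

theorem convex_quotient_add_well_defined_general (K : Subsemiring L)
    (hinv : ∀ a ∈ K, a ≠ 0 → a⁻¹ ∈ K) (hK : (K : Set L).OrdConnected)
    (x y u : L) (hu : u ∈ K) (hu0 : u ≠ 0) :
    ∃ w ∈ K, w ≠ 0 ∧ x + u * y = w * (x + y) :=
  exists_mem_ne_zero_eq_mul_of_le_mul hK K.one_mem hinv
    (K.add_mem K.one_mem (hinv u hu hu0)) (K.add_mem K.one_mem hu)
    (add_le_one_add_inv_mul_add_mul x y hu0) (add_mul_le_one_add_mul_add x y u)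

end CanonicallyOrdered

/-- Let `L` be an idempotent semifield and `K ⊆ L` a convex subsemifield.  Then addition on
`L` descends to the quotient of `L` by the action of `Kˣ`: for all `x, y ∈ L` and every
nonzero `u ∈ K` there is a nonzero `w ∈ K` with `x + u * y = w * (x + y)`. -/
theorem convex_quotient_add_well_defined {L : Type*} [Semifield L]
    (hL : ∀ x : L, x + x = x)
    (K : Subsemiring L)
    (hinv : ∀ x ∈ K, x ≠ 0 → x⁻¹ ∈ K)
    (hconv : ∀ x : L, ∀ y ∈ K, ∀ z ∈ K, x + y = y → x + z = x → x ∈ K) :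
    ∀ x y : L, ∀ u ∈ K, u ≠ 0 → ∃ w ∈ K, w ≠ 0 ∧ x + u * y = w * (x + y) := by
  let := IdemSemiring.ofSemiring hL
  exact convex_quotient_add_well_defined_general K hinv
    ⟨fun z hz y hy x hx => hconv x y hy z hz hx.2 ((add_comm x z).trans hx.1)⟩
end

section
/- Let K and L be idempotent semifields and f : K →+* L an injective semiring homomorphism such that L is a finite extension of K (there is a finite subset S ⊆ L such that every element of L is a finite sum of elements of the form f(a) * s with a ∈ K, s ∈ S). Then the extension is archimedean: for every x ∈ L there exists y ∈ K with x + f y = f y. -/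
/-!
In the order `x ≤ y ↔ x + y = y`, let `u` bound the generators of `L` from above, so that every
element of `L` lies below some `f a * u`. Applying this to `u * u` gives `u * u ≤ f b * u`, and
cancelling `u` gives `u ≤ f b`. Hence `x ≤ f a * u ≤ f (a * b)`.
-/

section IdemSemiring

variable {K L : Type*} [NonAssocSemiring K] [IdemSemiring L] {f : K →+* L} {u : L}

theorem le_of_mul_le_mul_right_of_ne_zero [IsRightCancelMulZero L] {a b c : L}
    (h : a * c ≤ b * c) (hc : c ≠ 0) : a ≤ b := by
  rw [← add_eq_right_iff_le, ← add_mul] at h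
  exact add_eq_right_iff_le.mp (mul_right_cancel₀ hc h)

theorem exists_le_map_mul_of_mem_closure {S : Set L} (hu : u ∈ upperBounds S) {x : L}
    (hx : x ∈ AddSubmonoid.closure {y : L | ∃ a : K, ∃ s ∈ S, y = f a * s}) :
    ∃ a : K, x ≤ f a * u := by
  induction hx using AddSubmonoid.closure_induction with
  | mem x hx =>
    obtain ⟨a, s, hs, rfl⟩ := hx
    exact ⟨a, mul_le_mul_right (hu hs) (f a)⟩
  | zero => exact ⟨0, zero_le⟩
  | add x y _ _ hx hy =>
    obtain ⟨a, ha⟩ := hx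
    obtain ⟨b, hb⟩ := hy
    exact ⟨a + b, by simpa only [map_add, add_mul] using add_le_add ha hb⟩

theorem exists_le_map_of_forall_exists_le_map_mul [IsRightCancelMulZero L]
    (hu : ∀ x : L, ∃ a : K, x ≤ f a * u) (x : L) : ∃ y : K, x ≤ f y := by
  obtain ⟨b, hub⟩ : ∃ b : K, u ≤ f b := by
    obtain rfl | hu₀ := eq_or_ne u 0
    · exact ⟨0, zero_le⟩
    · exact (hu (u * u)).imp fun _ h => le_of_mul_le_mul_right_of_ne_zero h hu₀
  obtain ⟨a, hxa⟩ := hu x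
  refine ⟨a * b, ?_⟩
  calc x ≤ f a * u := hxa
    _ ≤ f a * f b := mul_le_mul_right hub (f a)
    _ = f (a * b) := (map_mul f a b).symm

theorem finite_extension_archimedean_general [IsRightCancelMulZero L] (f : K →+* L) {S : Set L}
    (hS : BddAbove S)
    (hgen : ∀ x : L, x ∈ AddSubmonoid.closure {y : L | ∃ a : K, ∃ s ∈ S, y = f a * s}) (x : L) :
    ∃ y : K, x ≤ f y := by
  obtain ⟨u, hu⟩ := hS
  exact exists_le_map_of_forall_exists_le_map_mul
    (fun z => exists_le_map_mul_of_mem_closure hu (hgen z)) x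

end IdemSemiring

/-- Let `K` and `L` be idempotent semifields and `f : K →+* L` an injective semiring
homomorphism making `L` a finite extension of `K` (there is a finite subset `S ⊆ L` such that
every element of `L` is a finite sum of elements of the form `f a * s` with `a ∈ K`, `s ∈ S`).
Then the extension is archimedean: for every `x ∈ L` there is `y ∈ K` with `x + f y = f y`. -/
theorem finite_extension_archimedean {K L : Type*} [Semifield K] [Semifield L]
    (hK : ∀ x : K, x + x = x) (hL : ∀ x : L, x + x = x)
    (f : K →+* L) (hf : Function.Injective f)
    (hfin : ∃ S : Finset L, ∀ x : L,
      x ∈ AddSubmonoid.closure {y : L | ∃ a : K, ∃ s ∈ S, y = f a * s}) :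
    ∀ x : L, ∃ y : K, x + f y = f y := by
  let _ : IdemSemiring L := .ofSemiring hL
  exact hfin.elim fun S hS x =>
    (finite_extension_archimedean_general f S.bddAbove hS x).imp fun _ => add_eq_right_iff_le.mpr
end

section
/- Let L be an idempotent semifield and f : ℤ_max →+* L an injective semiring homomorphism such that the subgroup Z(f) := {w ∈ Lˣ : ∃ a : ℤ, (w : L) = f (trop a)} has finite index in Lˣ. Then there exist a positive integer n and a semiring isomorphism φ : L ≃+* ℤ_max such that φ (f (trop a)) = trop (n * a) for all a : ℤ; that is, L is isomorphic as an extension of ℤ_max to the relative Frobenius extension F^(n). -/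
open Tropical

/-!
In an idempotent semifield `(1 + u) ^ n` is the geometric sum `1 + u + ⋯ + u ^ n`; comparing the
exponents `n - 1` and `2 * n - 1` gives `(1 + u) ^ n = 1 + u ^ n`, and invariance of the sum under
multiplication by an `n`-th root of unity `u` gives `u = 1`. So for `n ≠ 0` the map `x ↦ x ^ n` is
an injective endomorphism of `L`.

In particular `Lˣ` is torsion-free, and raising to the index embeds it in the cyclic group `Z(f)`,
so `Lˣ` is cyclic and `Z(f)` consists of the `n`-th powers for some `n ≠ 0`. Thus `f` and
`x ↦ x ^ n` are injective homomorphisms into `L` with the same image, which identifies their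
sources `ℤ_max` and `L`.
-/

section IdempotentSemiring

theorem left_eq_zero_of_add_eq_zero_of_add_self {M : Type*} [AddMonoid M]
    (hidem : ∀ x : M, x + x = x) {x y : M} (h : x + y = 0) : x = 0 :=
  calc
    x = x + (x + y) := by rw [h, add_zero]
    _ = 0 := by rw [← add_assoc, hidem, h]

theorem one_add_pow_eq_geom_sum {R : Type*} [Semiring R] (hidem : ∀ x : R, x + x = x)
    (u : R) (n : ℕ) : (1 + u) ^ n = ∑ i ∈ Finset.range (n + 1), u ^ i := by
  induction n with
  | zero => simp
  | succ n ih =>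
    set s := ∑ i ∈ Finset.range n, u ^ i
    calc
      (1 + u) ^ (n + 1) = ∑ i ∈ Finset.range (n + 1), u ^ i +
          u * ∑ i ∈ Finset.range (n + 1), u ^ i := by rw [pow_succ', ih, add_mul, one_mul]
      _ = (u * s + 1) + u * (u ^ n + s) := by rw [geom_sum_succ, ← geom_sum_succ, geom_sum_succ']
      _ = u * u ^ n + (u * s + u * s) + 1 := by rw [mul_add]; abel
      _ = u * (u ^ n + s) + 1 := by rw [hidem, mul_add]
      _ = ∑ i ∈ Finset.range (n + 1 + 1), u ^ i := by rw [geom_sum_succ, geom_sum_succ']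

variable {L : Type*}

section DivisionSemiring

variable [DivisionSemiring L] (hidem : ∀ x : L, x + x = x)
include hidem

theorem geom_sum_ne_zero_of_add_self (u : L) (n : ℕ) :
    ∑ i ∈ Finset.range (n + 1), u ^ i ≠ 0 := by
  rw [← one_add_pow_eq_geom_sum hidem]
  exact pow_ne_zero n fun h ↦ one_ne_zero (left_eq_zero_of_add_eq_zero_of_add_self hidem h)

theorem one_add_pow_of_add_self (u : L) (n : ℕ) : (1 + u) ^ n = 1 + u ^ n := by
  cases n with
  | zero => simp only [pow_zero, hidem]
  | succ m =>
    set s := ∑ i ∈ Finset.range (m + 1), u ^ i with hs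
    refine mul_right_cancel₀ (geom_sum_ne_zero_of_add_self hidem u m) ?_
    calc
      (1 + u) ^ (m + 1) * s = (1 + u) ^ (m + 1 + m) := by
        rw [hs, ← one_add_pow_eq_geom_sum hidem, ← pow_add]
      _ = ∑ i ∈ Finset.range ((m + 1) + (m + 1)), u ^ i := one_add_pow_eq_geom_sum hidem u _
      _ = (1 + u ^ (m + 1)) * s := by
        simp only [Finset.sum_range_add, pow_add u (m + 1), ← Finset.mul_sum, ← hs, add_mul,
          one_mul]

theorem eq_one_of_pow_eq_one_of_add_self {u : L} {n : ℕ} (hn : n ≠ 0) (hu : u ^ n = 1) :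
    u = 1 := by
  obtain ⟨m, rfl⟩ := Nat.exists_eq_succ_of_ne_zero hn
  refine mul_right_cancel₀ (geom_sum_ne_zero_of_add_self hidem u m) ?_
  calc
    u * ∑ i ∈ Finset.range (m + 1), u ^ i = u * ∑ i ∈ Finset.range m, u ^ i + 1 := by
      rw [geom_sum_succ', mul_add, ← pow_succ', hu, add_comm]
    _ = 1 * ∑ i ∈ Finset.range (m + 1), u ^ i := by rw [one_mul, geom_sum_succ]

end DivisionSemiring

section Semifield

variable [Semifield L] (hidem : ∀ x : L, x + x = x)
include hidem

theorem isMulTorsionFree_of_add_self : IsMulTorsionFree L :=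
  .mk' fun x _ y hy n hn h ↦ (div_eq_one_iff_eq hy).1 <|
    eq_one_of_pow_eq_one_of_add_self hidem hn <| by
      rw [div_pow, h, div_self (pow_ne_zero n hy)]

theorem add_pow_of_add_self (x y : L) {n : ℕ} (hn : n ≠ 0) : (x + y) ^ n = x ^ n + y ^ n := by
  rcases eq_or_ne x 0 with rfl | hx
  · rw [zero_add, zero_pow hn, zero_add]
  · calc
      (x + y) ^ n = (x * (1 + y / x)) ^ n := by rw [mul_add, mul_one, mul_div_cancel₀ y hx]
      _ = x ^ n * (1 + (y / x) ^ n) := by rw [mul_pow, one_add_pow_of_add_self hidem]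
      _ = x ^ n + y ^ n := by
        rw [mul_add, mul_one, div_pow, mul_div_cancel₀ _ (pow_ne_zero n hx)]

/-- The relative Frobenius endomorphism `x ↦ x ^ n` of an idempotent semifield, for `n ≠ 0`. -/
def relativeFrobenius {n : ℕ} (hn : n ≠ 0) : L →+* L where
  __ := powMonoidWithZeroHom hn
  map_add' x y := add_pow_of_add_self hidem x y hn

@[simp]
theorem relativeFrobenius_apply {n : ℕ} (hn : n ≠ 0) (x : L) :
    relativeFrobenius hidem hn x = x ^ n :=
  rfl

theorem relativeFrobenius_injective {n : ℕ} (hn : n ≠ 0) :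
    Function.Injective (relativeFrobenius hidem hn) :=
  (isMulTorsionFree_of_add_self hidem).pow_left_injective hn

theorem coe_mem_rangeS_relativeFrobenius_iff {n : ℕ} (hn : n ≠ 0) {w : Lˣ} :
    (w : L) ∈ (relativeFrobenius hidem hn).rangeS ↔
      w ∈ (powMonoidHom n : Lˣ →* Lˣ).range := by
  constructor
  · rintro ⟨x, hx⟩
    have hx0 : x ≠ 0 := by
      rintro rfl
      exact w.ne_zero (hx.symm.trans (map_zero _))
    exact ⟨Units.mk0 x hx0, Units.ext hx⟩
  · rintro ⟨v, rfl⟩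
    exact ⟨v, rfl⟩

end Semifield

end IdempotentSemiring

section CyclicGroup

variable {G : Type*} [CommGroup G]

theorem isCyclic_of_finiteIndex [IsMulTorsionFree G] (H : Subgroup G) [H.FiniteIndex]
    [IsCyclic H] : IsCyclic G :=
  isCyclic_of_injective ((powMonoidHom H.index).codRestrict H H.pow_index_mem) fun _ _ h ↦
    pow_left_injective Subgroup.FiniteIndex.index_ne_zero (congrArg Subtype.val h)

theorem exists_eq_range_powMonoidHom [IsCyclic G] (H : Subgroup G) :
    ∃ n : ℕ, H = (powMonoidHom n : G →* G).range := by
  obtain ⟨v, hv⟩ := (isCyclic_iff_exists_zpowers_eq_top (α := G)).1 inferInstance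
  obtain ⟨g, rfl⟩ := (Subgroup.isCyclic_iff_exists_zpowers_eq_top H).1 inferInstance
  obtain ⟨k, hk : v ^ k = g⟩ : g ∈ Subgroup.zpowers v := hv ▸ Subgroup.mem_top g
  refine ⟨k.natAbs, ?_⟩
  rw [MonoidHom.range_eq_map, ← hv, MonoidHom.map_zpowers, powMonoidHom_apply, ← hk]
  rcases Int.natAbs_eq k with hk_abs | hk_abs
  · rw [← zpow_natCast v k.natAbs, ← hk_abs]
  · rw [← zpow_natCast v k.natAbs, ← Subgroup.zpowers_inv, ← zpow_neg, neg_eq_iff_eq_neg.2 hk_abs]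

end CyclicGroup

section Semiring

variable {R S T : Type*} [NonAssocSemiring R] [NonAssocSemiring S] [NonAssocSemiring T]

theorem exists_ringEquiv_of_rangeS_eq {f : R →+* T} {g : S →+* T} (hf : Function.Injective f)
    (hg : Function.Injective g) (h : f.rangeS = g.rangeS) :
    ∃ e : R ≃+* S, ∀ x, g (e x) = f x := by
  let ef := RingEquiv.ofLeftInverseS (Function.leftInverse_invFun hf)
  let eg := RingEquiv.ofLeftInverseS (Function.leftInverse_invFun hg)
  refine ⟨(ef.trans (RingEquiv.subsemiringCongr h)).trans eg.symm, fun x ↦ ?_⟩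
  exact congrArg Subtype.val (eg.apply_symm_apply (RingEquiv.subsemiringCongr h (ef x)))

end Semiring

section Tropical

/-- The inclusion of `M`, written multiplicatively, as the finite elements of the tropical
semiring `Tropical (WithTop M)`. -/
def tropCoeHom (M : Type*) [AddMonoid M] : Multiplicative M →* Tropical (WithTop M) where
  toFun a := trop (a.toAdd : WithTop M)
  map_one' := rfl
  map_mul' _ _ := rfl

section DivisionSemiring

variable {L : Type*} [DivisionSemiring L] (f : Tropical (WithTop ℤ) →+* L)

theorem tropUnitSubgroup_eq_range :
    tropUnitSubgroup f =
      ((f : Tropical (WithTop ℤ) →* L).comp (tropCoeHom ℤ)).toHomUnits.range := by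
  ext w
  exact ⟨fun ⟨a, ha⟩ ↦ ⟨.ofAdd a, Units.ext ha.symm⟩, fun ⟨a, ha⟩ ↦ ⟨a.toAdd, ha ▸ rfl⟩⟩

theorem isCyclic_tropUnitSubgroup : IsCyclic (tropUnitSubgroup f) := by
  rw [tropUnitSubgroup_eq_range]
  exact isCyclic_of_surjective _ (MonoidHom.rangeRestrict_surjective _)

variable {f}

theorem coe_mem_rangeS_iff_mem_tropUnitSubgroup {w : Lˣ} :
    (w : L) ∈ f.rangeS ↔ w ∈ tropUnitSubgroup f := by
  constructor
  · rintro ⟨t, ht⟩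
    induction t using Tropical.tropRec with
    | h t =>
      cases t with
      | top => exact absurd (ht.symm.trans (map_zero f)) w.ne_zero
      | coe a => exact ⟨a, ht.symm⟩
  · rintro ⟨a, ha⟩
    exact ⟨_, ha.symm⟩

theorem tropUnitSubgroup_ne_bot (hf : Function.Injective f) : tropUnitSubgroup f ≠ ⊥ := by
  rw [tropUnitSubgroup_eq_range, Ne, MonoidHom.range_eq_bot_iff]
  intro htriv
  have h_one : f (trop ((1 : ℤ) : WithTop ℤ)) = f 1 :=
    (congrArg Units.val (DFunLike.congr_fun htriv (Multiplicative.ofAdd 1))).trans (map_one f).symm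
  exact one_ne_zero (WithTop.coe_injective (trop_injective (hf h_one)))

end DivisionSemiring

theorem rangeS_relativeFrobenius_eq {L : Type*} [Semifield L] (hidem : ∀ x : L, x + x = x)
    {f : Tropical (WithTop ℤ) →+* L} {n : ℕ} (hn : n ≠ 0)
    (h : tropUnitSubgroup f = (powMonoidHom n).range) :
    (relativeFrobenius hidem hn).rangeS = f.rangeS := by
  ext x
  rcases eq_or_ne x 0 with rfl | hx
  · exact iff_of_true (zero_mem _) (zero_mem _)
  · lift x to Lˣ using hx.isUnit
    rw [coe_mem_rangeS_relativeFrobenius_iff, coe_mem_rangeS_iff_mem_tropUnitSubgroup, h]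

end Tropical

/-- Let `L` be an idempotent semifield and `f : ℤ_max →+* L` an injective semiring
homomorphism with finite unit index.  Then `L` is isomorphic, as an extension of `ℤ_max`, to
the relative Frobenius extension `F^(n)` for some positive integer `n`: there is a semiring
isomorphism `φ : L ≃+* ℤ_max` with `φ (f (trop a)) = trop (n * a)` for all `a : ℤ`. -/
theorem classification_of_finite_unit_index {L : Type*} [Semifield L]
    (hidem : ∀ x : L, x + x = x)
    (f : Tropical (WithTop ℤ) →+* L) (hf : Function.Injective f)
    (hui : (tropUnitSubgroup f).FiniteIndex) :
    ∃ (n : ℕ) (φ : L ≃+* Tropical (WithTop ℤ)), 0 < n ∧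
      ∀ a : ℤ, φ (f (trop (a : WithTop ℤ))) = trop (((n : ℤ) * a : ℤ) : WithTop ℤ) := by
  have : IsMulTorsionFree L := isMulTorsionFree_of_add_self hidem
  have : IsMulTorsionFree Lˣ := Units.val_injective.isMulTorsionFree (Units.coeHom L)
  have : IsCyclic (tropUnitSubgroup f) := isCyclic_tropUnitSubgroup f
  have : IsCyclic Lˣ := isCyclic_of_finiteIndex (tropUnitSubgroup f)
  obtain ⟨n, hZ⟩ := exists_eq_range_powMonoidHom (tropUnitSubgroup f)
  have hn : n ≠ 0 := by
    rintro rfl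
    have hpow : (powMonoidHom 0 : Lˣ →* Lˣ) = 1 := MonoidHom.ext pow_zero
    exact tropUnitSubgroup_ne_bot hf (by rw [hZ, hpow, MonoidHom.range_one])
  obtain ⟨φ, hφ⟩ := exists_ringEquiv_of_rangeS_eq (relativeFrobenius_injective hidem hn) hf
    (rangeS_relativeFrobenius_eq hidem hn hZ)
  refine ⟨n, φ, Nat.pos_of_ne_zero hn, fun a ↦ hf ?_⟩
  calc
    f (φ (f (trop a))) = f (trop (a : WithTop ℤ) ^ n) := by
      rw [hφ, relativeFrobenius_apply, map_pow]
    _ = f (trop ((n * a : ℤ) : WithTop ℤ)) := by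
      rw [← trop_nsmul, ← WithTop.coe_nsmul, nsmul_eq_mul]
end

section
/- Let L be an idempotent semifield and f : ℤ_max →+* L an injective semiring homomorphism such that L is a finite extension of ℤ_max (there is a finite subset S ⊆ L such that every element of L is a finite sum of elements of the form f(a) * s with a ∈ ℤ_max, s ∈ S). Then there exist a positive integer n and a semiring isomorphism φ : L ≃+* ℤ_max such that φ (f (trop a)) = trop (n * a) for all a : ℤ; that is, every finite extension of ℤ_max is isomorphic to F^(n) for some n. -/
open Tropical

/-!
In an idempotent division semiring the additive order `x ≤ y ↔ x + y = y` is compatible with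
multiplication. Put `u = f (trop 1)⁻¹ > 1`, so that the nonzero elements of the image of `f` are the
powers of `u`. Finite generation bounds every nonzero `x` between `u ^ k * s` and `u ^ k * σ`, where
`s` is a generator and `σ` is the sum of all of them, and it makes order intervals bounded away
from `0` finite. Hence the powers of `u` have finite index among the nonzero elements, some positive
power of any nonzero `x` is a power of `u`, and, since `x ^ m ≤ 1` forces `x ≤ 1`, the order is
total. By finiteness of intervals there is a least `p > 1`, and by maximality of `k` with
`p ^ k ≤ x` every nonzero `x` is a power of `p`; thus `L` is `ℤ_max`, with `u = p ^ n`.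
-/

open Set

section IdemSemiring

variable {R : Type*} [IdemSemiring R]

-- A sum of generators that lies above `c` absorbs all its terms below `c` once `c` is added.
theorem finite_Icc_of_closure_eq_top {G : Set R} (hG : AddSubmonoid.closure G = ⊤) {c d : R}
    (hfin : {g ∈ G | g ≤ d ∧ ¬ g ≤ c}.Finite) : (Icc c d).Finite := by
  set B : Set R := insert c {g ∈ G | g ≤ d ∧ ¬ g ≤ c}
  have hcB : c ∈ supClosure B := subset_supClosure (mem_insert ..)
  have sup_mem (x : R) : x ≤ d → c ⊔ x ∈ supClosure B := by
    have hx : x ∈ AddSubmonoid.closure G := hG ▸ AddSubmonoid.mem_top x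
    induction hx using AddSubmonoid.closure_induction with
    | mem g hg =>
      intro hgd
      by_cases hgc : g ≤ c
      · rwa [sup_eq_left.2 hgc]
      · exact supClosed_supClosure hcB (subset_supClosure (mem_insert_of_mem _ ⟨hg, hgd, hgc⟩))
    | zero => intro _; rwa [← add_eq_sup, add_zero]
    | add x y _ _ ihx ihy =>
      intro hxy
      obtain ⟨hx, hy⟩ := add_le_iff.1 hxy
      rw [add_eq_sup, sup_sup_distrib_left]
      exact supClosed_supClosure (ihx hx) (ihy hy)
  refine (hfin.insert c).supClosure.subset fun x ⟨hcx, hxd⟩ ↦ ?_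
  exact sup_eq_right.2 hcx ▸ sup_mem x hxd

end IdemSemiring

/-- Division semirings with idempotent addition, i.e. not necessarily commutative idempotent
semifields. The order inherited from `IdemSemiring` is `x ≤ y ↔ x + y = y`, so that addition is the
supremum and `0` is the least element. -/
class IdemDivisionSemiring (L : Type*) extends DivisionSemiring L, IdemSemiring L

namespace IdemDivisionSemiring

variable {L : Type*} [IdemDivisionSemiring L]

instance : PosMulReflectLE L where
  elim := fun ⟨a, ha⟩ _ _ h ↦ by simpa [ha.ne'] using mul_le_mul_right h a⁻¹

instance : MulPosReflectLE L where
  elim := fun ⟨a, ha⟩ _ _ h ↦ by simpa [ha.ne'] using mul_le_mul_left h a⁻¹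

instance : PosMulStrictMono L := PosMulReflectLT.toPosMulStrictMono L

theorem le_one_of_pow_le_one {x : L} {m : ℕ} (hm : m ≠ 0) (h : x ^ m ≤ 1) : x ≤ 1 := by
  -- The geometric sum `y = 1 + x + ⋯ + x ^ (m - 1)` satisfies `x * y ≤ y`.
  set y := ∑ i ∈ Finset.range m, x ^ i
  have one_le : 1 ≤ y := by
    simpa using Finset.single_le_sum_of_canonicallyOrdered (f := (x ^ ·))
      (Finset.mem_range.2 (Nat.pos_of_ne_zero hm))
  have mul_le : x * y ≤ y := calc
    x * y ≤ x * y + 1 := le_self_add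
    _ = x ^ m + y := by rw [← geom_sum_succ, geom_sum_succ']
    _ ≤ y := add_le (h.trans one_le) le_rfl
  exact (mul_le_iff_le_one_left (zero_lt_one.trans_le one_le)).1 mul_le

theorem one_le_of_one_le_pow {x : L} {m : ℕ} (hm : m ≠ 0) (h : 1 ≤ x ^ m) : 1 ≤ x := by
  have hx : x ≠ 0 := by rintro rfl; simp [hm] at h
  refine (inv_le_one₀ (pos_iff_ne_zero.2 hx)).1 (le_one_of_pow_le_one hm ?_)
  rw [inv_pow]
  exact inv_le_one_of_one_le₀ h

/-- `L` is a finitely generated left module over the subsemiring `{0} ∪ {u ^ k | k : ℤ}`. The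
generators are taken nonzero, which costs no generality and makes their translates comparable
with powers of `u`. -/
def IsFiniteOverZPowers (u : L) : Prop :=
  ∃ S : Finset L, 0 ∉ S ∧ AddSubmonoid.closure {y : L | ∃ k : ℤ, ∃ s ∈ S, y = u ^ k * s} = ⊤

section FiniteOverZPowers

variable {u : L}

theorem exists_zpow_mul_le_and_le_zpow_mul_sum (hu : 1 ≤ u) {S : Finset L}
    (hS : AddSubmonoid.closure {y : L | ∃ k : ℤ, ∃ s ∈ S, y = u ^ k * s} = ⊤) {x : L}
    (hx : x ≠ 0) : ∃ k : ℤ, ∃ s ∈ S, u ^ k * s ≤ x ∧ x ≤ u ^ k * ∑ t ∈ S, t := by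
  have hxS := hS ▸ AddSubmonoid.mem_top x
  induction hxS using AddSubmonoid.closure_induction with
  | mem y hy =>
    obtain ⟨k, s, hs, rfl⟩ := hy
    exact ⟨k, s, hs, le_rfl,
      mul_le_mul_right (Finset.single_le_sum_of_canonicallyOrdered (f := id) hs) _⟩
  | zero => exact absurd rfl hx
  | add x y _ _ ihx ihy =>
    rcases eq_or_ne x 0 with rfl | hx₀
    · simpa using ihy (by simpa using hx)
    rcases eq_or_ne y 0 with rfl | hy₀
    · simpa using ihx hx₀
    obtain ⟨k, s, hs, hsx, hxk⟩ := ihx hx₀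
    obtain ⟨l, t, ht, hty, hyl⟩ := ihy hy₀
    rcases le_total k l with hkl | hlk
    · exact ⟨l, t, ht, hty.trans le_add_self,
        add_le (hxk.trans (mul_le_mul_left (zpow_le_zpow_right₀ hu hkl) _)) hyl⟩
    · exact ⟨k, s, hs, hsx.trans le_self_add,
        add_le hxk (hyl.trans (mul_le_mul_left (zpow_le_zpow_right₀ hu hlk) _))⟩

theorem IsFiniteOverZPowers.exists_le_zpow (h : IsFiniteOverZPowers u) (hu : 1 ≤ u) (x : L) :
    ∃ k : ℤ, x ≤ u ^ k := by
  obtain ⟨S, -, hS⟩ := h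
  set σ := ∑ t ∈ S, t
  have le_mul (y : L) : ∃ k : ℤ, y ≤ u ^ k * σ := by
    rcases eq_or_ne y 0 with rfl | hy
    · exact ⟨0, zero_le⟩
    · obtain ⟨k, -, -, -, hk⟩ := exists_zpow_mul_le_and_le_zpow_mul_sum hu hS hy
      exact ⟨k, hk⟩
  obtain ⟨m, hm⟩ := le_mul 1
  have hσ : 0 < σ := pos_of_mul_pos_right (zero_lt_one.trans_le hm) zero_le
  obtain ⟨l, hl⟩ := le_mul (σ * σ)
  obtain ⟨k, hk⟩ := le_mul x
  refine ⟨k + l, hk.trans ?_⟩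
  rw [zpow_add₀ (zero_lt_one.trans_le hu).ne']
  exact mul_le_mul_right (le_of_mul_le_mul_right hl hσ) _

theorem IsFiniteOverZPowers.exists_zpow_le (h : IsFiniteOverZPowers u) (hu : 1 ≤ u) {x : L}
    (hx : x ≠ 0) : ∃ k : ℤ, u ^ k ≤ x := by
  obtain ⟨k, hk⟩ := h.exists_le_zpow hu x⁻¹
  refine ⟨-k, ?_⟩
  rw [zpow_neg]
  exact inv_le_of_inv_le₀ (pos_iff_ne_zero.2 hx) hk

theorem IsFiniteOverZPowers.finite_Icc (h : IsFiniteOverZPowers u) (hu : 1 < u) {c : L}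
    (hc : c ≠ 0) (d : L) : (Icc c d).Finite := by
  have hmono : StrictMono (u ^ · : ℤ → L) := zpow_right_strictMono₀ hu
  obtain ⟨S, hS₀, hS⟩ := id h
  refine finite_Icc_of_closure_eq_top hS ?_
  have finite_exponents (s : L) (hs : s ∈ S) :
      {k : ℤ | u ^ k * s ≤ d ∧ ¬ u ^ k * s ≤ c}.Finite := by
    have hs₀ : 0 < s := pos_iff_ne_zero.2 (ne_of_mem_of_not_mem hs hS₀)
    obtain ⟨n, hn⟩ := h.exists_le_zpow hu.le (d * s⁻¹)
    obtain ⟨m, hm⟩ := h.exists_zpow_le hu.le (mul_ne_zero hc (inv_ne_zero hs₀.ne'))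
    refine (finite_Ioc m n).subset fun k ⟨hkd, hkc⟩ ↦ ⟨?_, ?_⟩
    · by_contra! hkm
      exact hkc ((le_mul_inv_iff₀ hs₀).1 ((hmono.monotone hkm).trans hm))
    · exact hmono.le_iff_le.1 (((le_mul_inv_iff₀ hs₀).2 hkd).trans hn)
  refine (S.finite_toSet.biUnion fun s hs ↦ (finite_exponents s hs).image (u ^ · * s)).subset ?_
  rintro _ ⟨⟨k, s, hs, rfl⟩, hk⟩
  exact mem_biUnion hs (mem_image_of_mem _ hk)

theorem IsFiniteOverZPowers.exists_finite_forall_eq_zpow_mul (h : IsFiniteOverZPowers u)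
    (hu : 1 < u) : ∃ W : Set L, W.Finite ∧ ∀ x ≠ 0, ∃ k : ℤ, ∃ w ∈ W, x = u ^ k * w := by
  obtain ⟨S, hS₀, hS⟩ := id h
  refine ⟨⋃ s ∈ S, Icc s (∑ t ∈ S, t), S.finite_toSet.biUnion fun s hs ↦
    h.finite_Icc hu (ne_of_mem_of_not_mem hs hS₀) _, fun x hx ↦ ?_⟩
  obtain ⟨k, s, hs, hsx, hxk⟩ := exists_zpow_mul_le_and_le_zpow_mul_sum hu.le hS hx
  have huk : 0 < u ^ k := zpow_pos (zero_lt_one.trans hu) k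
  exact ⟨k, (u ^ k)⁻¹ * x,
    mem_biUnion hs ⟨(le_inv_mul_iff₀ huk).2 hsx, (inv_mul_le_iff₀ huk).2 hxk⟩,
    (mul_inv_cancel_left₀ huk.ne' x).symm⟩

theorem IsFiniteOverZPowers.exists_pow_eq_zpow (h : IsFiniteOverZPowers u) (hu : 1 < u) {x : L}
    (hx : x ≠ 0) : ∃ m ≠ 0, ∃ k : ℤ, x ^ m = u ^ k := by
  obtain ⟨W, hW, hdecomp⟩ := h.exists_finite_forall_eq_zpow_mul hu
  choose k w hwW hxw using fun m : ℕ ↦ hdecomp (x ^ m) (pow_ne_zero m hx)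
  obtain ⟨i, j, hij, hw⟩ := hW.exists_lt_map_eq_of_forall_mem hwW
  have hu₀ : u ≠ 0 := (zero_lt_one.trans hu).ne'
  refine ⟨j - i, (Nat.sub_pos_of_lt hij).ne', k j - k i, ?_⟩
  have hwi : w i ≠ 0 := right_ne_zero_of_mul (hxw i ▸ pow_ne_zero i hx)
  rw [pow_sub₀ x hx hij.le, hxw i, hxw j, ← hw, mul_inv_rev, mul_assoc, mul_inv_cancel_left₀ hwi,
    zpow_sub₀ hu₀, div_eq_mul_inv]

protected theorem IsFiniteOverZPowers.le_total (h : IsFiniteOverZPowers u) (hu : 1 < u) (x y : L) :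
    x ≤ y ∨ y ≤ x := by
  rcases eq_or_ne x 0 with rfl | hx
  · exact Or.inl zero_le
  rcases eq_or_ne y 0 with rfl | hy
  · exact Or.inr zero_le
  obtain ⟨m, hm, k, hk⟩ := h.exists_pow_eq_zpow hu (mul_ne_zero (inv_ne_zero hx) hy)
  rcases le_total 0 k with hk₀ | hk₀
  · have : 1 ≤ (x⁻¹ * y) ^ m := hk ▸ one_le_zpow₀ hu.le hk₀
    exact Or.inl ((one_le_inv_mul₀ (pos_iff_ne_zero.2 hx)).1 (one_le_of_one_le_pow hm this))
  · have : (x⁻¹ * y) ^ m ≤ 1 := hk ▸ zpow_le_one_of_nonpos₀ hu.le hk₀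
    exact Or.inr ((inv_mul_le_one₀ (pos_iff_ne_zero.2 hx)).1 (le_one_of_pow_le_one hm this))

theorem IsFiniteOverZPowers.exists_isLeast_Ioi_one (h : IsFiniteOverZPowers u) (hu : 1 < u) :
    ∃ p : L, IsLeast (Ioi 1) p := by
  have hfin : (Ioc 1 u).Finite := (h.finite_Icc hu one_ne_zero u).subset Ioc_subset_Icc_self
  obtain ⟨p, ⟨hp, hpu⟩, hmin⟩ := hfin.exists_minimal ⟨u, hu, le_rfl⟩
  refine ⟨p, hp, fun y hy ↦ ?_⟩
  rcases h.le_total hu p y with hpy | hyp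
  · exact hpy
  · exact hmin ⟨hy, hyp.trans hpu⟩ hyp

theorem IsFiniteOverZPowers.exists_le_zpow_of_one_lt (h : IsFiniteOverZPowers u) (hu : 1 < u)
    {p : L} (hp : 1 < p) (x : L) : ∃ k : ℤ, x ≤ p ^ k := by
  obtain ⟨m, hm, k, hk⟩ := h.exists_pow_eq_zpow hu (zero_lt_one.trans hp).ne'
  have k_pos : 0 < k := (one_lt_zpow_iff_right₀ hu).1 (hk ▸ one_lt_pow₀ hp hm)
  obtain ⟨l, hl⟩ := h.exists_le_zpow hu.le x
  refine ⟨m * max l 0, hl.trans ?_⟩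
  rw [zpow_mul, zpow_natCast, hk, ← zpow_mul]
  exact zpow_le_zpow_right₀ hu.le
    ((le_max_left l 0).trans (le_mul_of_one_le_left (le_max_right l 0) k_pos))

end FiniteOverZPowers

theorem exists_zpow_eq_of_isLeast_Ioi_one {p : L} (hp : IsLeast (Ioi 1) p)
    (harch : ∀ x : L, ∃ k : ℤ, x ≤ p ^ k) {x : L} (hx : x ≠ 0) : ∃ k : ℤ, p ^ k = x := by
  have hp₁ : 1 < p := hp.1
  have hp₀ : p ≠ 0 := (zero_lt_one.trans hp₁).ne'
  obtain ⟨l, hl⟩ := harch x⁻¹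
  obtain ⟨b, hb⟩ := harch x
  have hlx : p ^ (-l) ≤ x := by
    rw [zpow_neg]; exact inv_le_of_inv_le₀ (pos_iff_ne_zero.2 hx) hl
  obtain ⟨k, hkx, hmax⟩ := Int.exists_greatest_of_bdd (P := (p ^ · ≤ x))
    ⟨b, fun k hk ↦ (zpow_le_zpow_iff_right₀ hp₁).1 (hk.trans hb)⟩ ⟨-l, hlx⟩
  have hpk : 0 < p ^ k := zpow_pos (zero_lt_one.trans hp₁) k
  refine ⟨k, hkx.antisymm (by_contra fun hxk ↦ ?_)⟩
  have one_lt : 1 < (p ^ k)⁻¹ * x := (one_lt_inv_mul₀ hpk).2 (lt_of_le_not_ge hkx hxk)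
  have : p ^ (k + 1) ≤ x := by
    rw [zpow_add_one₀ hp₀]; exact (le_inv_mul_iff₀ hpk).1 (hp.2 one_lt)
  exact absurd (hmax _ this) (by omega)

theorem IsFiniteOverZPowers.exists_one_lt_forall_exists_zpow_eq {u : L}
    (h : IsFiniteOverZPowers u) (hu : 1 < u) :
    ∃ p : L, 1 < p ∧ ∀ x ≠ 0, ∃ k : ℤ, p ^ k = x := by
  obtain ⟨p, hp⟩ := h.exists_isLeast_Ioi_one hu
  exact ⟨p, hp.1, fun _ ↦
    exists_zpow_eq_of_isLeast_Ioi_one hp (h.exists_le_zpow_of_one_lt hu hp.1)⟩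

end IdemDivisionSemiring

section Tropical

variable {L : Type*} [IdemDivisionSemiring L]

/-- The homomorphism from `ℤ_max` sending `trop k` to `p ^ (-k)`. The sign reverses the order, as
addition is the minimum on exponents in `Tropical (WithTop ℤ)` and the supremum in `L`. -/
def tropicalZPowHom (p : L) (hp : 1 ≤ p) : Tropical (WithTop ℤ) →+* L where
  toFun t := WithTop.recTopCoe (C := fun _ ↦ L) 0 (fun k : ℤ ↦ p ^ (-k)) (untrop t)
  map_zero' := rfl
  map_one' := zpow_zero p
  map_add' s t := by
    induction s using tropRec with | h s
    induction t using tropRec with | h t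
    rw [untrop_add, untrop_trop, untrop_trop]
    cases s with
    | top => simp
    | coe s =>
      cases t with
      | top => simp
      | coe t =>
        have hanti : Antitone fun k : ℤ ↦ p ^ (-k) :=
          (zpow_right_mono₀ hp).comp_antitone fun _ _ ↦ neg_le_neg
        rw [← WithTop.coe_min, add_eq_sup]
        exact hanti.map_inf s t
  map_mul' s t := by
    induction s using tropRec with | h s
    induction t using tropRec with | h t
    rw [untrop_mul, untrop_trop, untrop_trop]
    cases s with
    | top => simp
    | coe s =>
      cases t with
      | top => simp
      | coe t =>
        rw [← WithTop.coe_add]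
        simp only [WithTop.recTopCoe_coe]
        rw [neg_add, zpow_add₀ (zero_lt_one.trans_le hp).ne']

theorem tropicalZPowHom_bijective {p : L} (hp : 1 < p) (hsurj : ∀ x ≠ 0, ∃ k : ℤ, p ^ k = x) :
    Function.Bijective (tropicalZPowHom p hp.le) := by
  have hp₀ (k : ℤ) : p ^ k ≠ 0 := zpow_ne_zero k (zero_lt_one.trans hp).ne'
  constructor
  · intro s t hst
    induction s using tropRec with | h s
    induction t using tropRec with | h t
    cases s with
    | top =>
      cases t with
      | top => rfl
      | coe t => exact absurd hst.symm (hp₀ _)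
    | coe s =>
      cases t with
      | top => exact absurd hst (hp₀ _)
      | coe t => rw [neg_injective ((zpow_right_strictMono₀ hp).injective hst)]
  · intro x
    rcases eq_or_ne x 0 with rfl | hx
    · exact ⟨0, map_zero _⟩
    · obtain ⟨k, rfl⟩ := hsurj x hx
      exact ⟨trop ((-k : ℤ) : WithTop ℤ), congrArg (p ^ ·) (neg_neg k)⟩

theorem map_trop_coe_eq_zpow {F G₀ : Type*} [GroupWithZero G₀]
    [FunLike F (Tropical (WithTop ℤ)) G₀] [MonoidHomClass F (Tropical (WithTop ℤ)) G₀] (f : F)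
    (a : ℤ) : f (trop (a : WithTop ℤ)) = f (trop ((1 : ℤ) : WithTop ℤ)) ^ a := by
  let g : Multiplicative ℤ →* G₀ :=
    { toFun k := f (trop (k.toAdd : WithTop ℤ))
      map_one' := map_one f
      map_mul' k l := map_mul f (trop (k.toAdd : WithTop ℤ)) (trop (l.toAdd : WithTop ℤ)) }
  calc f (trop (a : WithTop ℤ)) = g.toHomUnits (.ofAdd a) := rfl
    _ = (g.toHomUnits (.ofAdd 1) ^ a : G₀ˣ) := by rw [MonoidHom.apply_mint]; rfl
    _ = f (trop ((1 : ℤ) : WithTop ℤ)) ^ a := Units.val_zpow_eq_zpow_val _ _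

theorem map_trop_one_lt_one {R : Type*} [IdemSemiring R] {f : Tropical (WithTop ℤ) →+* R}
    (hf : Function.Injective f) :
    f (trop ((1 : ℤ) : WithTop ℤ)) < 1 := by
  refine lt_of_le_of_ne (add_eq_right_iff_le.1 ?_) fun h ↦ ?_
  · rw [← map_one f, ← map_add]
    rfl
  · rw [← map_one f] at h
    exact absurd (hf h) (by decide)

theorem isFiniteOverZPowers_inv_map_trop_one (f : Tropical (WithTop ℤ) →+* L) {S : Finset L}
    (hS : ∀ x : L,
      x ∈ AddSubmonoid.closure {y : L | ∃ a : Tropical (WithTop ℤ), ∃ s ∈ S, y = f a * s}) :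
    IdemDivisionSemiring.IsFiniteOverZPowers (f (trop ((1 : ℤ) : WithTop ℤ)))⁻¹ := by
  classical
  refine ⟨S.erase 0, S.notMem_erase 0, top_unique fun x _ ↦ ?_⟩
  refine AddSubmonoid.closure_le.2 ?_ (hS x)
  rintro _ ⟨a, s, hs, rfl⟩
  rcases eq_or_ne s 0 with rfl | hs₀
  · rw [mul_zero]; exact zero_mem _
  induction a using tropRec with | h a
  cases a with
  | top => rw [trop_top, map_zero, zero_mul]; exact zero_mem _
  | coe a =>
    refine AddSubmonoid.subset_closure ⟨-a, s, Finset.mem_erase.2 ⟨hs₀, hs⟩, ?_⟩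
    rw [inv_zpow', neg_neg]
    exact congrArg (· * s) (map_trop_coe_eq_zpow f a)

end Tropical

theorem add_self_of_ringHom_tropical {L : Type*} [NonAssocSemiring L]
    (f : Tropical (WithTop ℤ) →+* L) (x : L) : x + x = x := by
  have one_add_one : (1 : L) + 1 = 1 := by rw [← map_one f, ← map_add, Tropical.add_self]
  rw [← mul_two, ← one_add_one_eq_two, one_add_one, mul_one]

theorem classification_of_finite_extensions_general {L : Type*} [DivisionSemiring L]
    (f : Tropical (WithTop ℤ) →+* L) (hf : Function.Injective f)
    (hfin : ∃ S : Finset L, ∀ x : L,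
      x ∈ AddSubmonoid.closure {y : L | ∃ a : Tropical (WithTop ℤ), ∃ s ∈ S, y = f a * s}) :
    ∃ (n : ℕ) (φ : L ≃+* Tropical (WithTop ℤ)), 0 < n ∧
      ∀ a : ℤ, φ (f (trop (a : WithTop ℤ))) = trop (((n : ℤ) * a : ℤ) : WithTop ℤ) := by
  let _ : IdemDivisionSemiring L :=
    { ‹DivisionSemiring L›, IdemSemiring.ofSemiring (add_self_of_ringHom_tropical f) with }
  obtain ⟨S, hS⟩ := hfin
  set v := f (trop ((1 : ℤ) : WithTop ℤ))
  have hv₀ : v ≠ 0 := (map_ne_zero_iff f hf).2 (by decide)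
  have hu : 1 < v⁻¹ := (one_lt_inv₀ (pos_iff_ne_zero.2 hv₀)).2 (map_trop_one_lt_one hf)
  obtain ⟨p, hp, hpow⟩ :=
    (isFiniteOverZPowers_inv_map_trop_one f hS).exists_one_lt_forall_exists_zpow_eq hu
  obtain ⟨n, hn⟩ := hpow v⁻¹ (inv_ne_zero hv₀)
  have n_pos : 0 < n := (one_lt_zpow_iff_right₀ hp).1 (hn ▸ hu)
  lift n to ℕ using n_pos.le
  let ψ := RingEquiv.ofBijective _ (tropicalZPowHom_bijective hp hpow)
  refine ⟨n, ψ.symm, by exact_mod_cast n_pos, fun a ↦ ψ.symm_apply_eq.2 ?_⟩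
  calc f (trop (a : WithTop ℤ)) = v ^ a := map_trop_coe_eq_zpow f a
    _ = p ^ (-(n * a : ℤ)) := by rw [← inv_inv v, ← hn, zpow_neg, zpow_mul, inv_zpow]

/-- Every finite extension of `ℤ_max` is isomorphic to `F^(n)` for some positive integer
`n`: if `L` is an idempotent semifield and `f : ℤ_max →+* L` an injective semiring
homomorphism making `L` a finitely generated semimodule over `ℤ_max`, then there is a
semiring isomorphism `φ : L ≃+* ℤ_max` with `φ (f (trop a)) = trop (n * a)` for all
`a : ℤ`. -/
theorem classification_of_finite_extensions {L : Type*} [Semifield L]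
    (hidem : ∀ x : L, x + x = x)
    (f : Tropical (WithTop ℤ) →+* L) (hf : Function.Injective f)
    (hfin : ∃ S : Finset L, ∀ x : L,
      x ∈ AddSubmonoid.closure {y : L | ∃ a : Tropical (WithTop ℤ), ∃ s ∈ S, y = f a * s}) :
    ∃ (n : ℕ) (φ : L ≃+* Tropical (WithTop ℤ)), 0 < n ∧
      ∀ a : ℤ, φ (f (trop (a : WithTop ℤ))) = trop (((n : ℤ) * a : ℤ) : WithTop ℤ) :=
  classification_of_finite_extensions_general f hf hfin
end

section
/- Let D be a (not necessarily commutative) division semiring with idempotent addition which is selective (for all x, y ∈ D, x + y = x or x + y = y). If x, y ∈ D and n is a positive integer such that x^n + y^n = y^n, then x + y = y. -/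
/- In the natural order `x ≤ y ↔ x + y = y` of an idempotent semiring, `0` is the least element and
multiplication is monotone. Cancellation makes it strictly monotone, so that `y < x` would give
`y ^ n < x ^ n`; between comparable elements an inequality of powers therefore descends to the
bases. -/

theorem le_of_pow_le_pow_left_of_le_or_le {M : Type*} [MonoidWithZero M] [PartialOrder M]
    [PosMulStrictMono M] [MulPosMono M] {x y : M} {n : ℕ} (hn : n ≠ 0) (hy : 0 ≤ y)
    (hxy : y ≤ x ∨ x ≤ y) (hpow : x ^ n ≤ y ^ n) : x ≤ y := by
  rcases hxy with hyx | hxy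
  · have not_lt : ¬ y < x := fun hlt => (pow_lt_pow_left₀ hlt hy hn).not_ge hpow
    exact (eq_of_le_of_not_lt hyx not_lt).ge
  · exact hxy

theorem selective_monotonic_division_general {S : Type*} [Semiring S] [IsLeftCancelMulZero S]
    (hidem : ∀ x : S, x + x = x) {x y : S} (hxy : x + y = x ∨ x + y = y)
    {n : ℕ} (hn : n ≠ 0) (h : x ^ n + y ^ n = y ^ n) : x + y = y := by
  let _ : IdemSemiring S := IdemSemiring.ofSemiring hidem
  simp only [add_eq_left_iff_le, add_eq_right_iff_le] at hxy h ⊢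
  have mul_strictMono : PosMulStrictMono S := PosMulMono.toPosMulStrictMono
  exact le_of_pow_le_pow_left_of_le_or_le hn zero_le hxy h

/-- Let `D` be a (not necessarily commutative) division semiring with idempotent addition
which is selective.  If `x, y ∈ D` and `n` is a positive integer with
`x ^ n + y ^ n = y ^ n`, then `x + y = y`. -/
theorem selective_monotonic_division {D : Type*} [DivisionSemiring D]
    (hidem : ∀ x : D, x + x = x)
    (hsel : ∀ x y : D, x + y = x ∨ x + y = y)
    (x y : D) (n : ℕ) (hn : 0 < n) (h : x ^ n + y ^ n = y ^ n) : x + y = y :=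
  selective_monotonic_division_general hidem (hsel x y) hn.ne' h
end
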